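/- arXiv:1408.3374 — 7 statements merged into one kernel-verified Lean document; each statement's English description precedes it below -/
import Mathlib

section
/- Let a < b be real numbers, let u : [a,b] → ℝ be continuous, let Q ≥ 1, let g_1, …, g_Q : [a,b] → ℝ be continuous, and let α_q ≤ β_q be real numbers for q = 1,…,Q. Suppose the set P := { p : p is a Borel probability measure on [a,b] and ∫ g_q dp ∈ [α_q, β_q] for all q = 1,…,Q } is nonempty. Then inf_{p ∈ P} ∫ u dp = sup { z + Σ_{q=1}^{Q} (α_q·x_q − β_q·y_q) : z ∈ ℝ, x_1,…,x_Q ≥ 0, y_1,…,y_Q ≥ 0, and z + Σ_{q=1}^{Q} (x_q − y_q)·g_q(ω) ≤ u(ω) for all ω ∈ [a,b] }. -/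
/-!
The duality reduces to a separation argument in `ℝ × ℝ^Q`. Let `φ ω = (u ω, g ω)`, and let `K` be
the convex hull of the image of `[a,b]` under `φ`, which is compact by Carathéodory's theorem
(`isCompact_convexHull_of_finiteDimensional`). Every point of `K` is the vector of moments
`(∫ u dp, ∫ g dp)` of some probability measure `p` on `[a,b]`, because such vectors form a convex
set containing the `φ ω` (`exists_measure_of_mem_convexHull`). If `c` is below the primal value,
then `K` is disjoint from the closed convex set `{(t, m) | t ≤ c, α ≤ m ≤ β}`, and Hahn–Banach
strictly separates the two sets by a functional `(t, m) ↦ l * t + ∑ q, w q * m q`. Integrating the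
separating inequality against a feasible measure gives `l > 0`, so `l` can be normalised to `1`.
The negative and positive parts of `w` are then dual multipliers, and the dual value they give
exceeds `c`, since `∑ q, (β q * (w q)⁺ - α q * (w q)⁻)` is the maximum of `w` over the box `[α, β]`
(`exists_dual_gt`). The other inequality is weak duality (`dual_le_primal`).
-/

open MeasureTheory

/-- In finite dimension the convex hull of a compact set is compact: by Carathéodory's theorem it is
the union, over `n ≤ dim E + 1`, of the images of `stdSimplex ℝ (Fin n) × K ^ n` under
`(w, z) ↦ ∑ i, w i • z i`. -/
theorem isCompact_convexHull_of_finiteDimensional {E : Type*} [NormedAddCommGroup E]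
    [NormedSpace ℝ E] [FiniteDimensional ℝ E] {K : Set E} (hK : IsCompact K) :
    IsCompact (convexHull ℝ K) := by
  have h : convexHull ℝ K = ⋃ n ∈ Set.Iic (Module.finrank ℝ E + 1),
      (fun x : (Fin n → ℝ) × (Fin n → E) => ∑ i, x.1 i • x.2 i) ''
        (stdSimplex ℝ (Fin n) ×ˢ Set.univ.pi fun _ => K) := by
    ext v
    simp only [Set.mem_iUnion, exists_prop, Set.mem_Iic]
    constructor
    · intro hv
      obtain ⟨ι, _, z, w, hz, hai, hw, hw1, hwz⟩ := eq_pos_convex_span_of_mem_convexHull hv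
      let e := Fintype.equivFin ι
      refine ⟨Fintype.card ι, hai.card_le_finrank_succ.trans ?_, (w ∘ e.symm, z ∘ e.symm),
        ⟨⟨fun i => (hw _).le, ?_⟩, fun i _ => hz ⟨_, rfl⟩⟩, ?_⟩
      · gcongr
        exact Submodule.finrank_le _
      · rw [← hw1]
        exact Equiv.sum_comp e.symm w
      · rw [← hwz]
        exact Equiv.sum_comp e.symm fun i => w i • z i
    · rintro ⟨n, -, ⟨w, z⟩, ⟨⟨hw, hw1⟩, hz⟩, rfl⟩
      exact (convex_convexHull ℝ K).sum_mem (fun i _ => hw i) hw1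
        fun i _ => subset_convexHull ℝ K (hz i trivial)
  rw [h]
  refine (Set.finite_Iic _).isCompact_biUnion fun n _ => ?_
  exact ((isCompact_stdSimplex ℝ (Fin n)).prod (isCompact_univ_pi fun _ => hK)).image (by fun_prop)

/-- `p` is a probability measure on `ℝ` concentrated on `[a, b]`. -/
def IsProbOn (a b : ℝ) (p : Measure ℝ) : Prop :=
  IsProbabilityMeasure p ∧ p (Set.Icc a b)ᶜ = 0

theorem IsProbOn.ae_mem {a b : ℝ} {p : Measure ℝ} (hp : IsProbOn a b p) :
    ∀ᵐ x ∂p, x ∈ Set.Icc a b := by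
  rw [ae_iff]; exact hp.2

theorem IsProbOn.integrable {a b : ℝ} {p : Measure ℝ} (hp : IsProbOn a b p) {h : ℝ → ℝ}
    (hh : ContinuousOn h (Set.Icc a b)) : Integrable h p := by
  have := hp.1
  have h1 : IntegrableOn h (Set.Icc a b) p := hh.integrableOn_compact isCompact_Icc
  rwa [IntegrableOn, Measure.restrict_eq_self_of_ae_mem hp.ae_mem] at h1

theorem isProbOn_dirac {a b ω : ℝ} (h : ω ∈ Set.Icc a b) : IsProbOn a b (Measure.dirac ω) := by
  refine ⟨inferInstance, ?_⟩
  rw [Measure.dirac_apply' _ measurableSet_Icc.compl]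
  simpa using h

theorem IsProbOn.convexComb {a b : ℝ} {p q : Measure ℝ} (hp : IsProbOn a b p)
    (hq : IsProbOn a b q) {s t : ℝ} (hs : 0 ≤ s) (ht : 0 ≤ t) (hst : s + t = 1) :
    IsProbOn a b (ENNReal.ofReal s • p + ENNReal.ofReal t • q) := by
  have := hp.1
  have := hq.1
  refine ⟨⟨?_⟩, ?_⟩
  · simp [← ENNReal.ofReal_add hs ht, hst]
  · simp [hp.2, hq.2]

theorem IsProbOn.integral_convexComb {a b : ℝ} {p q : Measure ℝ} (hp : IsProbOn a b p)
    (hq : IsProbOn a b q) {s t : ℝ} (hs : 0 ≤ s) (ht : 0 ≤ t) {h : ℝ → ℝ}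
    (hh : ContinuousOn h (Set.Icc a b)) :
    ∫ x, h x ∂(ENNReal.ofReal s • p + ENNReal.ofReal t • q) =
      s * ∫ x, h x ∂p + t * ∫ x, h x ∂q := by
  rw [integral_add_measure ((hp.integrable hh).smul_measure ENNReal.ofReal_ne_top)
    ((hq.integrable hh).smul_measure ENNReal.ofReal_ne_top)]
  simp [integral_smul_measure, ENNReal.toReal_ofReal hs, ENNReal.toReal_ofReal ht]

theorem exists_measure_of_mem_convexHull {a b : ℝ} {u : ℝ → ℝ}
    (hu : ContinuousOn u (Set.Icc a b)) {Q : ℕ} {g : Fin Q → ℝ → ℝ}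
    (hg : ∀ q, ContinuousOn (g q) (Set.Icc a b)) {v : ℝ × (Fin Q → ℝ)}
    (hv : v ∈ convexHull ℝ ((fun ω => (u ω, fun q => g q ω)) '' Set.Icc a b)) :
    ∃ p, IsProbOn a b p ∧ ∫ x, u x ∂p = v.1 ∧ ∀ q, ∫ x, g q x ∂p = v.2 q := by
  refine convexHull_min (t := {v | ∃ p, IsProbOn a b p ∧ ∫ x, u x ∂p = v.1 ∧
    ∀ q, ∫ x, g q x ∂p = v.2 q}) ?_ ?_ hv
  · rintro _ ⟨ω, hω, rfl⟩
    exact ⟨Measure.dirac ω, isProbOn_dirac hω, by simp, by simp⟩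
  · rintro v ⟨p, hp, hpu, hpg⟩ w ⟨q, hq, hqu, hqg⟩ s t hs ht hst
    refine ⟨_, hp.convexComb hq hs ht hst, ?_, fun i => ?_⟩
    · simp [hp.integral_convexComb hq hs ht hu, hpu, hqu]
    · simp [hp.integral_convexComb hq hs ht (hg i), hpg, hqg]

theorem IsProbOn.le_integral_lin {a b : ℝ} {p : Measure ℝ} (hp : IsProbOn a b p) {u : ℝ → ℝ}
    (hu : ContinuousOn u (Set.Icc a b)) {Q : ℕ} {g : Fin Q → ℝ → ℝ}
    (hg : ∀ q, ContinuousOn (g q) (Set.Icc a b)) {r l : ℝ} {w : Fin Q → ℝ}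
    (h : ∀ ω ∈ Set.Icc a b, r ≤ l * u ω + ∑ q, w q * g q ω) :
    r ≤ l * ∫ x, u x ∂p + ∑ q, w q * ∫ x, g q x ∂p := by
  have := hp.1
  have hi : ∀ q ∈ Finset.univ, Integrable (fun x => w q * g q x) p :=
    fun q _ => (hp.integrable (hg q)).const_mul _
  have h1 : ∫ _, r ∂p ≤ ∫ x, (l * u x + ∑ q, w q * g q x) ∂p :=
    integral_mono_ae (integrable_const _)
      (((hp.integrable hu).const_mul _).add (integrable_finsetSum _ hi))
      (hp.ae_mem.mono h)
  rw [integral_add ((hp.integrable hu).const_mul _) (integrable_finsetSum _ hi),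
    integral_finsetSum _ hi] at h1
  simpa [integral_const_mul] using h1

/-- Weak duality. -/
theorem dual_le_primal {a b : ℝ} {p : Measure ℝ} (hp : IsProbOn a b p) {u : ℝ → ℝ}
    (hu : ContinuousOn u (Set.Icc a b)) {Q : ℕ} {g : Fin Q → ℝ → ℝ}
    (hg : ∀ q, ContinuousOn (g q) (Set.Icc a b)) {α β : Fin Q → ℝ}
    (hm : ∀ q, (∫ x, g q x ∂p) ∈ Set.Icc (α q) (β q)) {z : ℝ} {x y : Fin Q → ℝ}
    (hx : ∀ q, 0 ≤ x q) (hy : ∀ q, 0 ≤ y q)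
    (h : ∀ ω ∈ Set.Icc a b, z + ∑ q, (x q - y q) * g q ω ≤ u ω) :
    z + ∑ q, (α q * x q - β q * y q) ≤ ∫ x, u x ∂p := by
  have h1 : z ≤ 1 * ∫ x, u x ∂p + ∑ q, (y q - x q) * ∫ x, g q x ∂p := by
    refine hp.le_integral_lin hu hg fun ω hω => ?_
    have h2 := h ω hω
    have h3 : ∑ q, (y q - x q) * g q ω = - ∑ q, (x q - y q) * g q ω := by
      rw [← Finset.sum_neg_distrib]
      exact Finset.sum_congr rfl fun q _ => by ring
    linarith
  have h4 : ∑ q, (α q * x q - β q * y q) ≤ - ∑ q, (y q - x q) * ∫ x, g q x ∂p := by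
    rw [← Finset.sum_neg_distrib]
    refine Finset.sum_le_sum fun q _ => ?_
    nlinarith [mul_le_mul_of_nonneg_right (hm q).1 (hx q),
      mul_le_mul_of_nonneg_right (hm q).2 (hy q)]
  linarith

/-- Any `c` strictly below all primal values is strictly below some dual value. -/
theorem exists_dual_gt {a b : ℝ} {u : ℝ → ℝ}
    (hu : ContinuousOn u (Set.Icc a b)) {Q : ℕ} {g : Fin Q → ℝ → ℝ}
    (hg : ∀ q, ContinuousOn (g q) (Set.Icc a b)) {α β : Fin Q → ℝ} (hαβ : ∀ q, α q ≤ β q)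
    {p₀ : Measure ℝ} (hp₀ : IsProbOn a b p₀)
    (hm₀ : ∀ q, (∫ x, g q x ∂p₀) ∈ Set.Icc (α q) (β q)) {c : ℝ}
    (hc : ∀ p, IsProbOn a b p → (∀ q, (∫ x, g q x ∂p) ∈ Set.Icc (α q) (β q)) →
      c < ∫ x, u x ∂p) :
    ∃ (z : ℝ) (x y : Fin Q → ℝ), (∀ q, 0 ≤ x q) ∧ (∀ q, 0 ≤ y q) ∧
      (∀ ω ∈ Set.Icc a b, z + ∑ q, (x q - y q) * g q ω ≤ u ω) ∧
      c < z + ∑ q, (α q * x q - β q * y q) := by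
  have hK : IsCompact (convexHull ℝ ((fun ω => (u ω, fun q => g q ω)) '' Set.Icc a b)) :=
    isCompact_convexHull_of_finiteDimensional
      (isCompact_Icc.image_of_continuousOn (hu.prodMk (continuousOn_pi.2 hg)))
  have hdisj : Disjoint (Set.Iic c ×ˢ Set.Icc α β)
      (convexHull ℝ ((fun ω => (u ω, fun q => g q ω)) '' Set.Icc a b)) := by
    rw [Set.disjoint_left]
    rintro v ⟨hv1, hv2⟩ hv
    obtain ⟨p, hp, hpu, hpg⟩ := exists_measure_of_mem_convexHull hu hg hv
    have := hc p hp fun q => by rw [hpg]; exact ⟨hv2.1 q, hv2.2 q⟩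
    rw [hpu] at this
    exact absurd hv1 (not_le.2 this)
  obtain ⟨f, s, r, hfs, hsr, hfr⟩ := geometric_hahn_banach_closed_compact
    ((convex_Iic c).prod (convex_Icc α β)) (isClosed_Iic.prod isClosed_Icc)
    (convex_convexHull ℝ _) hK hdisj
  obtain ⟨l, w, hf⟩ : ∃ (l : ℝ) (w : Fin Q → ℝ), ∀ t m, f (t, m) = l * t + ∑ q, w q * m q := by
    refine ⟨f (1, 0), fun q => f (0, Pi.single q 1), fun t m => ?_⟩
    have h1 : (t, m) = t • ((1 : ℝ), (0 : Fin Q → ℝ)) +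
        ∑ q, m q • ((0 : ℝ), (Pi.single q 1 : Fin Q → ℝ)) := by
      ext i
      · simp [Prod.fst_sum]
      · simp [Prod.snd_sum, Finset.sum_apply, Pi.single_apply]
    rw [h1, map_add, map_sum, map_smul]
    simp only [map_smul, smul_eq_mul]
    congr 1
    · ring
    · exact Finset.sum_congr rfl fun q _ => by ring
  have hbox : ∀ m : Fin Q → ℝ, m ∈ Set.Icc α β → l * c + ∑ q, w q * m q < s := by
    intro m hm
    have := hfs (c, m) ⟨le_refl c, hm⟩
    rwa [hf] at this
  have hω : ∀ ω ∈ Set.Icc a b, r ≤ l * u ω + ∑ q, w q * g q ω := by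
    intro ω hω
    have := hfr _ (subset_convexHull ℝ _ ⟨ω, hω, rfl⟩)
    rw [hf] at this
    exact this.le
  have hl : 0 < l := by
    have h1 := hp₀.le_integral_lin hu hg hω
    have h2 := hbox (fun q => ∫ x, g q x ∂p₀) ⟨fun q => (hm₀ q).1, fun q => (hm₀ q).2⟩
    have h3 := hc p₀ hp₀ hm₀
    by_contra! h
    nlinarith [mul_nonneg_of_nonpos_of_nonpos h (sub_nonpos.2 h3.le)]
  refine ⟨r / l, fun q => max (-w q) 0 / l, fun q => max (w q) 0 / l, fun q => by positivity,
    fun q => by positivity, fun ω hmem => ?_, ?_⟩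
  · have h1 : ∀ q, (max (-w q) 0 / l - max (w q) 0 / l) * g q ω = -(w q * g q ω) / l := by
      intro q
      rcases le_total (w q) 0 with h | h
      · rw [max_eq_left (by linarith), max_eq_right h]; ring
      · rw [max_eq_right (by linarith), max_eq_left h]; ring
    simp only [h1]
    rw [← Finset.sum_div, ← add_div, div_le_iff₀ hl, Finset.sum_neg_distrib]
    linarith [hω ω hmem]
  -- The separating inequality is used at the vertex of the box where `w` is maximal.
  · have h1 := hbox (fun q => if 0 ≤ w q then β q else α q)
      ⟨fun q => by dsimp only; split_ifs <;> simp [hαβ q],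
       fun q => by dsimp only; split_ifs <;> simp [hαβ q]⟩
    have h2 : ∀ q, α q * (max (-w q) 0 / l) - β q * (max (w q) 0 / l) =
        -(w q * if 0 ≤ w q then β q else α q) / l := by
      intro q
      split_ifs with h
      · rw [max_eq_right (by linarith), max_eq_left h]; ring
      · rw [max_eq_left (by linarith), max_eq_right (by linarith)]; ring
    simp only [h2]
    rw [← Finset.sum_div, ← add_div, lt_div_iff₀ hl, Finset.sum_neg_distrib]
    linarith

/-- Strong duality for the inner moment problem: the infimum of `∫ u dp` over Borel
probability measures `p` on `[a,b]` satisfying finitely many two-sided moment constraints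
equals the supremum of the semi-infinite dual linear program. -/
theorem inner_moment_problem_strong_duality
    (a b : ℝ) (hab : a < b) (u : ℝ → ℝ) (hu : ContinuousOn u (Set.Icc a b))
    (Q : ℕ) (hQ : 1 ≤ Q) (g : Fin Q → ℝ → ℝ)
    (hg : ∀ q, ContinuousOn (g q) (Set.Icc a b))
    (α β : Fin Q → ℝ) (hαβ : ∀ q, α q ≤ β q)
    (P : Set (Measure ℝ))
    (hP : P = { p | IsProbabilityMeasure p ∧ p (Set.Icc a b)ᶜ = 0 ∧
      ∀ q, (∫ x, g q x ∂p) ∈ Set.Icc (α q) (β q) })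
    (hne : P.Nonempty) :
    sInf { v | ∃ p ∈ P, v = ∫ x, u x ∂p } =
      sSup { v | ∃ (z : ℝ) (x y : Fin Q → ℝ),
        (∀ q, 0 ≤ x q) ∧ (∀ q, 0 ≤ y q) ∧
        (∀ ω ∈ Set.Icc a b, z + ∑ q, (x q - y q) * g q ω ≤ u ω) ∧
        v = z + ∑ q, (α q * x q - β q * y q) } := by
  subst hP
  obtain ⟨p₀, hp₀, hp₀', hm₀⟩ := hne
  obtain ⟨ω₀, -, hmin⟩ := isCompact_Icc.exists_isMinOn (Set.nonempty_Icc.2 hab.le) hu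
  have hwk : ∀ v ∈ { v | ∃ (z : ℝ) (x y : Fin Q → ℝ),
        (∀ q, 0 ≤ x q) ∧ (∀ q, 0 ≤ y q) ∧
        (∀ ω ∈ Set.Icc a b, z + ∑ q, (x q - y q) * g q ω ≤ u ω) ∧
        v = z + ∑ q, (α q * x q - β q * y q) },
      ∀ p : Measure ℝ, IsProbabilityMeasure p ∧ p (Set.Icc a b)ᶜ = 0 ∧
        (∀ q, (∫ x, g q x ∂p) ∈ Set.Icc (α q) (β q)) → v ≤ ∫ x, u x ∂p := by
    rintro _ ⟨z, x, y, hx, hy, h, rfl⟩ p ⟨hp, hp', hm⟩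
    exact dual_le_primal ⟨hp, hp'⟩ hu hg hm hx hy h
  -- The constant `min u` with zero multipliers is dual feasible.
  have hdual : u ω₀ ∈ { v | ∃ (z : ℝ) (x y : Fin Q → ℝ),
        (∀ q, 0 ≤ x q) ∧ (∀ q, 0 ≤ y q) ∧
        (∀ ω ∈ Set.Icc a b, z + ∑ q, (x q - y q) * g q ω ≤ u ω) ∧
        v = z + ∑ q, (α q * x q - β q * y q) } :=
    ⟨u ω₀, 0, 0, by simp, by simp, fun ω hω => by simpa using hmin hω, by simp⟩
  refine le_antisymm (le_of_forall_lt fun c hc => ?_) ?_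
  · obtain ⟨z, x, y, hx, hy, h, hlt⟩ := exists_dual_gt (c := c) hu hg hαβ ⟨hp₀, hp₀'⟩ hm₀
      fun p hp hm => hc.trans_le <| csInf_le
        ⟨u ω₀, by rintro _ ⟨p, hp, rfl⟩; exact hwk _ hdual p hp⟩
        ⟨p, ⟨hp.1, hp.2, hm⟩, rfl⟩
    exact lt_csSup_of_lt ⟨∫ x, u x ∂p₀, fun v hv => hwk v hv p₀ ⟨hp₀, hp₀', hm₀⟩⟩
      ⟨z, x, y, hx, hy, h, rfl⟩ hlt
  · refine csSup_le ⟨_, hdual⟩ fun v hv => le_csInf ⟨_, p₀, ⟨hp₀, hp₀', hm₀⟩, rfl⟩ ?_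
    rintro _ ⟨p, hp, rfl⟩
    exact hwk v hv p hp
end

section
/- Let n ≥ 1. For each i = 1,…,n let a_i ≤ b_i be real numbers, let P_i be a nonempty set of Borel probability measures on [a_i, b_i], let m_i := sup_{p ∈ P_i} ∫ x dp(x), and assume the Dirac measure δ_{m_i} belongs to P_i. Let f : ℝ → ℝ be convex and nondecreasing. Then for every t ∈ ℝ, inf_{(p_1,…,p_n) ∈ P_1 × ⋯ × P_n} ∫ f(t − (x_1 + ⋯ + x_n)) d(p_1 ⊗ ⋯ ⊗ p_n)(x_1,…,x_n) = f(t − (m_1 + ⋯ + m_n)), and the infimum is attained at the product of Dirac measures δ_{m_1} ⊗ ⋯ ⊗ δ_{m_n}. -/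
open MeasureTheory

/-!
For `p i ∈ P i`, put `g y = f (t - y)`, which is convex, continuous and antitone, and let
`S x = ∑ i, x i`. Under `Measure.pi p` every coordinate is almost surely bounded, so `S` and `g ∘ S`
are integrable, and the marginals give `∫ S = ∑ i, ∫ x, x ∂(p i) ≤ ∑ i, m i`. Jensen's inequality
and antitonicity yield `∫ g ∘ S ≥ g (∫ S) ≥ g (∑ i, m i)`. Under the product of the Dirac
measures `S` is almost surely equal to `∑ i, m i`, so the bound is attained.
-/

lemma ae_mem_Icc_pi {n : ℕ} {a b : Fin n → ℝ} {p : Fin n → Measure ℝ}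
    [∀ i, IsProbabilityMeasure (p i)] (hp : ∀ i, p i (Set.Icc (a i) (b i))ᶜ = 0) :
    ∀ᵐ x ∂(Measure.pi p), ∀ i, x i ∈ Set.Icc (a i) (b i) := by
  rw [ae_all_iff]
  intro i
  have h : ∀ᵐ y ∂(p i), y ∈ Set.Icc (a i) (b i) := hp i
  exact (measurePreserving_eval p i).quasiMeasurePreserving.ae h

lemma integrable_id_of_Icc {a b : ℝ} {p : Measure ℝ} [IsProbabilityMeasure p]
    (hp : p (Set.Icc a b)ᶜ = 0) : Integrable (fun x : ℝ => x) p :=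
  Integrable.of_mem_Icc a b aemeasurable_id hp

lemma integral_le_of_Icc {a b : ℝ} {p : Measure ℝ} [IsProbabilityMeasure p]
    (hp : p (Set.Icc a b)ᶜ = 0) : ∫ x, x ∂p ≤ b := by
  have h : ∀ᵐ y ∂p, y ∈ Set.Icc a b := hp
  have := integral_mono_ae (integrable_id_of_Icc hp) (integrable_const b)
    (h.mono fun y hy => hy.2)
  simpa using this

/-- The lower bound: Jensen's inequality for the total cost, followed by monotonicity of `f`. -/
lemma le_integral_pi {n : ℕ} {a b : Fin n → ℝ} {p : Fin n → Measure ℝ}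
    [∀ i, IsProbabilityMeasure (p i)] (hp : ∀ i, p i (Set.Icc (a i) (b i))ᶜ = 0)
    {m : Fin n → ℝ} (hm : ∀ i, ∫ x, x ∂(p i) ≤ m i)
    {f : ℝ → ℝ} (hf : ConvexOn ℝ Set.univ f) (hmono : Monotone f) (t : ℝ) :
    f (t - ∑ i, m i) ≤ ∫ x : Fin n → ℝ, f (t - ∑ i, x i) ∂(Measure.pi p) := by
  have hcont : Continuous f := continuousOn_univ.1 (hf.continuousOn isOpen_univ)
  have hmeas : Measurable fun x : Fin n → ℝ => f (t - ∑ i, x i) := by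
    have : Continuous fun x : Fin n → ℝ => f (t - ∑ i, x i) := by fun_prop
    exact this.measurable
  have hae := ae_mem_Icc_pi hp
  have hcoord : ∀ i, Integrable (fun x : Fin n → ℝ => x i) (Measure.pi p) := fun i =>
    (measurePreserving_eval p i).integrable_comp_of_integrable (integrable_id_of_Icc (hp i))
  have hsum : Integrable (fun x : Fin n → ℝ => ∑ i, x i) (Measure.pi p) :=
    integrable_finsetSum _ fun i _ => hcoord i
  have hint : Integrable (fun x : Fin n → ℝ => f (t - ∑ i, x i)) (Measure.pi p) := by
    refine Integrable.of_mem_Icc (f (t - ∑ i, b i)) (f (t - ∑ i, a i)) hmeas.aemeasurable ?_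
    filter_upwards [hae] with x hx
    exact ⟨hmono (sub_le_sub_left (Finset.sum_le_sum fun i _ => (hx i).2) t),
      hmono (sub_le_sub_left (Finset.sum_le_sum fun i _ => (hx i).1) t)⟩
  have hmean : ∫ x : Fin n → ℝ, (t - ∑ i, x i) ∂(Measure.pi p) = t - ∑ i, ∫ x, x ∂(p i) := by
    rw [integral_sub (integrable_const t) hsum, integral_finsetSum _ fun i _ => hcoord i]
    simp only [integral_const, probReal_univ, one_smul]
    congr 1
    refine Finset.sum_congr rfl fun i _ => ?_
    exact integral_comp_eval (μ := p) (f := fun y : ℝ => y) aestronglyMeasurable_id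
  calc f (t - ∑ i, m i) ≤ f (t - ∑ i, ∫ x, x ∂(p i)) :=
        hmono (sub_le_sub_left (Finset.sum_le_sum fun i _ => hm i) t)
    _ = f (∫ x : Fin n → ℝ, (t - ∑ i, x i) ∂(Measure.pi p)) := by rw [hmean]
    _ ≤ _ := hf.map_integral_le hcont.continuousOn isClosed_univ (by simp)
        ((integrable_const t).sub hsum) hint

lemma integral_pi_dirac {n : ℕ} (m : Fin n → ℝ) (f : ℝ → ℝ) (t : ℝ) :
    (∫ x : Fin n → ℝ, f (t - ∑ i, x i)
      ∂(Measure.pi fun i => Measure.dirac (m i))) = f (t - ∑ i, m i) := by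
  have h : ∀ᵐ x ∂(Measure.pi fun i => Measure.dirac (m i)), ∀ i, x i ∈ Set.Icc (m i) (m i) :=
    ae_mem_Icc_pi fun i => by simp
  have h2 : (fun x : Fin n → ℝ => f (t - ∑ i, x i))
      =ᵐ[Measure.pi fun i => Measure.dirac (m i)] fun _ => f (t - ∑ i, m i) := by
    filter_upwards [h] with x hx
    have : x = m := funext fun i => le_antisymm (hx i).2 (hx i).1
    rw [this]
  rw [integral_congr_ae h2]
  simp

/-- For a convex nondecreasing risk function `f`, the static worst case of the
expected risk along a path with independent arc costs drawn from ambiguity sets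
`P i` (each containing the Dirac measure at its worst-case mean `m i`) equals
`f (t - ∑ i, m i)`, and is attained at the product of Dirac measures. -/
theorem robust_convex_path_worst_case
    (n : ℕ) (hn : 1 ≤ n) (a b : Fin n → ℝ) (hab : ∀ i, a i ≤ b i)
    (P : Fin n → Set (Measure ℝ)) (hPne : ∀ i, (P i).Nonempty)
    (hP : ∀ i, ∀ p ∈ P i, IsProbabilityMeasure p ∧ p (Set.Icc (a i) (b i))ᶜ = 0)
    (m : Fin n → ℝ) (hm : ∀ i, m i = sSup { v | ∃ p ∈ P i, v = ∫ x, x ∂p })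
    (hdirac : ∀ i, Measure.dirac (m i) ∈ P i)
    (f : ℝ → ℝ) (hf : ConvexOn ℝ Set.univ f) (hmono : Monotone f) (t : ℝ) :
    sInf { v | ∃ p : Fin n → Measure ℝ, (∀ i, p i ∈ P i) ∧
        v = ∫ x : Fin n → ℝ, f (t - ∑ i, x i) ∂(Measure.pi p) } = f (t - ∑ i, m i) ∧
      (∫ x : Fin n → ℝ, f (t - ∑ i, x i)
          ∂(Measure.pi fun i => Measure.dirac (m i))) = f (t - ∑ i, m i) := by
  refine ⟨?_, integral_pi_dirac m f t⟩
  refine IsLeast.csInf_eq ⟨⟨_, hdirac, (integral_pi_dirac m f t).symm⟩, ?_⟩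
  rintro _ ⟨p, hp, rfl⟩
  have : ∀ i, IsProbabilityMeasure (p i) := fun i => (hP i _ (hp i)).1
  refine le_integral_pi (fun i => (hP i _ (hp i)).2) (fun i => ?_) hf hmono t
  rw [hm i]
  -- The means are bounded above by `b i`, so the real `sSup` is a genuine supremum.
  refine le_csSup ⟨b i, ?_⟩ ⟨p i, hp i, rfl⟩
  rintro _ ⟨q, hq, rfl⟩
  have := (hP i q hq).1
  exact integral_le_of_Icc (hP i q hq).2
end

section
/- Let n ≥ 1. For each i = 1,…,n let a_i ≤ b_i be real numbers, let P_i be a nonempty set of Borel probability measures on [a_i, b_i], let m_i := sup_{p ∈ P_i} ∫ x dp(x), and assume the Dirac measure δ_{m_i} belongs to P_i. Let f : ℝ → ℝ be convex and nondecreasing. Define v_{n+1} := f and, backwards for i = n, n−1, …, 1, define v_i(t) := inf_{p ∈ P_i} ∫ v_{i+1}(t − x) dp(x) for t ∈ ℝ. Then for every i ∈ {1,…,n+1} and every t ∈ ℝ, v_i(t) = f(t − (m_i + ⋯ + m_n)). In particular v_1(t) = f(t − (m_1 + ⋯ + m_n)), which equals the static robust value inf over product measures (p_1,…,p_n) ∈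 P_1 × ⋯ × P_n of ∫ f(t − Σ_i x_i) d(p_1 ⊗ ⋯ ⊗ p_n). -/
/-!
Every infimum in the statement is attained at the Dirac masses at the worst-case means `m i`.
Indeed, if `X` is a bounded random variable with mean at most `M`, then Jensen's inequality and
monotonicity give `f (t - M) ≤ f (t - E X) ≤ E f (t - X)` (`le_integral_of_mean_le`), while for
`X = M` almost surely both ends agree. In the recursion this is applied to one arc at a time, the
value function `v (i + 1)` being a translate of `f`, so that backwards induction closes; in the
static problem it is applied once, to the sum of the coordinates under a product measure, whose
mean is the sum of the marginal means.
-/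

open MeasureTheory

/-- Jensen's inequality combined with monotonicity: a bounded random variable of mean at most `M`
is at least as good, for a convex nondecreasing `f` of the remaining budget, as the constant `M`. -/
lemma le_integral_of_mean_le {Ω : Type*} [MeasurableSpace Ω] (μ : Measure Ω)
    [IsProbabilityMeasure μ] {f : ℝ → ℝ} (hf : ConvexOn ℝ Set.univ f) (hmono : Monotone f)
    {X : Ω → ℝ} (hX : AEMeasurable X μ) {c d M : ℝ} (hcd : ∀ᵐ ω ∂μ, X ω ∈ Set.Icc c d)
    (hM : ∫ ω, X ω ∂μ ≤ M) (t : ℝ) :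
    f (t - M) ≤ ∫ ω, f (t - X ω) ∂μ := by
  have hcont : Continuous f :=
    continuousOn_univ.mp (hf.continuousOn isOpen_univ)
  have hXi : Integrable X μ := Integrable.of_mem_Icc c d hX hcd
  have hfi : Integrable (f ∘ fun ω => t - X ω) μ := by
    refine Integrable.of_mem_Icc (f (t - d)) (f (t - c))
      (hcont.measurable.comp_aemeasurable (hX.const_sub t)) ?_
    filter_upwards [hcd] with ω hω
    exact ⟨hmono (by linarith [hω.2]), hmono (by linarith [hω.1])⟩
  have hJ := hf.map_integral_le hcont.continuousOn isClosed_univ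
    (Filter.Eventually.of_forall fun ω => Set.mem_univ (t - X ω))
    ((integrable_const t).sub hXi) hfi
  rw [integral_sub (integrable_const t) hXi] at hJ
  simp only [integral_const, probReal_univ, one_smul] at hJ
  exact (hmono (by linarith)).trans hJ

/-- The means of measures supported in `[a, b]` are bounded above, so each is at most the supremum;
without this bound the real `sSup` would be a junk value. -/
lemma mean_le_sSup {a b : ℝ} {P : Set (Measure ℝ)}
    (hP : ∀ p ∈ P, IsProbabilityMeasure p ∧ p (Set.Icc a b)ᶜ = 0) {p : Measure ℝ} (hp : p ∈ P) :
    ∫ x, x ∂p ≤ sSup { v | ∃ p ∈ P, v = ∫ x, x ∂p } := by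
  refine le_csSup ⟨b, ?_⟩ ⟨p, hp, rfl⟩
  rintro _ ⟨q, hq, rfl⟩
  obtain ⟨hq1, hq2⟩ := hP q hq
  have hae : ∀ᵐ x ∂q, x ∈ Set.Icc a b := mem_ae_iff.mpr hq2
  have hint : Integrable (fun x : ℝ => x) q :=
    Integrable.of_mem_Icc a b measurable_id.aemeasurable hae
  calc ∫ x, x ∂q ≤ ∫ _, b ∂q :=
        integral_mono_ae hint (integrable_const b) (hae.mono fun x hx => hx.2)
    _ = b := by simp

/-- Dynamic-programming form of the robust path problem for convex nondecreasing
risk functions: the backwards recursion `v i t = inf_{p ∈ P i} ∫ v (i+1) (t - x) dp`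
with terminal condition `v n = f` satisfies `v i t = f (t - ∑_{j ≥ i} m j)`; in
particular `v 0 t` equals the static worst case over product measures. -/
theorem robust_convex_path_dynamic_programming
    (n : ℕ) (hn : 1 ≤ n) (a b : Fin n → ℝ) (hab : ∀ i, a i ≤ b i)
    (P : Fin n → Set (Measure ℝ)) (hPne : ∀ i, (P i).Nonempty)
    (hP : ∀ i, ∀ p ∈ P i, IsProbabilityMeasure p ∧ p (Set.Icc (a i) (b i))ᶜ = 0)
    (m : Fin n → ℝ) (hm : ∀ i, m i = sSup { v | ∃ p ∈ P i, v = ∫ x, x ∂p })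
    (hdirac : ∀ i, Measure.dirac (m i) ∈ P i)
    (f : ℝ → ℝ) (hf : ConvexOn ℝ Set.univ f) (hmono : Monotone f)
    (v : Fin (n + 1) → ℝ → ℝ)
    (hvlast : v (Fin.last n) = f)
    (hvrec : ∀ (i : Fin n) (t : ℝ),
      v i.castSucc t = sInf { w | ∃ p ∈ P i, w = ∫ x, v i.succ (t - x) ∂p }) :
    (∀ (i : Fin (n + 1)) (t : ℝ),
      v i t = f (t - ∑ j ∈ Finset.univ.filter (fun j : Fin n => (i : ℕ) ≤ (j : ℕ)), m j)) ∧
    (∀ t : ℝ,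
      v 0 t = sInf { w | ∃ p : Fin n → Measure ℝ, (∀ i, p i ∈ P i) ∧
        w = ∫ x : Fin n → ℝ, f (t - ∑ i, x i) ∂(Measure.pi p) }) := by
  have hmean : ∀ i, ∀ p ∈ P i, ∫ x, x ∂p ≤ m i := fun i p hp => by
    rw [hm i]; exact mean_le_sSup (hP i) hp
  have hae : ∀ i, ∀ p ∈ P i, ∀ᵐ x ∂p, x ∈ Set.Icc (a i) (b i) :=
    fun i p hp => mem_ae_iff.mpr (hP i p hp).2
  have key : ∀ (i : Fin (n + 1)) (t : ℝ),
      v i t = f (t - ∑ j ∈ Finset.univ.filter (fun j : Fin n => (i : ℕ) ≤ (j : ℕ)), m j) := by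
    intro i
    induction i using Fin.reverseInduction with
    | last =>
      intro t
      have : Finset.univ.filter (fun j : Fin n => ((Fin.last n : Fin (n + 1)) : ℕ) ≤ (j : ℕ))
          = ∅ := by
        ext j; simp
      rw [this, hvlast]; simp
    | cast i ih =>
      intro t
      have hfilter : Finset.univ.filter (fun j : Fin n => (i.castSucc : ℕ) ≤ (j : ℕ))
          = insert i (Finset.univ.filter (fun j : Fin n => (i.succ : ℕ) ≤ (j : ℕ))) := by
        ext j
        simp only [Finset.mem_filter, Finset.mem_univ, true_and, Finset.mem_insert, Fin.ext_iff,
          Fin.val_castSucc, Fin.val_succ]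
        omega
      rw [hvrec, hfilter, Finset.sum_insert (by simp)]
      simp only [ih]
      set S := ∑ j ∈ Finset.univ.filter (fun j : Fin n => (i.succ : ℕ) ≤ (j : ℕ)), m j
      refine IsLeast.csInf_eq ⟨⟨_, hdirac i, ?_⟩, ?_⟩
      · rw [integral_dirac]; congr 1; ring
      · rintro _ ⟨p, hp, rfl⟩
        have := (hP i p hp).1
        have h := le_integral_of_mean_le p hf hmono measurable_id.aemeasurable
          (hae i p hp) (hmean i p hp) (t - S)
        simp only [id, sub_right_comm t S] at h
        rwa [← sub_sub]
  refine ⟨key, fun t => ?_⟩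
  rw [key 0 t]
  simp only [Fin.val_zero, Nat.zero_le, Finset.filter_true]
  symm
  refine IsLeast.csInf_eq ⟨⟨fun i => Measure.dirac (m i), hdirac, ?_⟩, ?_⟩
  · -- Under the product of the Dirac masses, `x i = m i` for all `i` almost surely.
    have h : ∀ᵐ x ∂(Measure.pi fun i => Measure.dirac (m i)), ∀ i, x i = m i :=
      ae_all_iff.mpr fun i =>
        (measurePreserving_eval (fun i => Measure.dirac (m i)) i).quasiMeasurePreserving.ae
          (p := fun y => y = m i) (by simp [ae_dirac_eq])
    rw [integral_congr_ae (g := fun _ => f (t - ∑ i, m i))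
      (h.mono fun x hx => by simp only [hx])]
    simp
  · rintro _ ⟨p, hp, rfl⟩
    have : ∀ i, IsProbabilityMeasure (p i) := fun i => (hP i _ (hp i)).1
    have hev := fun i => measurePreserving_eval p i
    have hbd : ∀ i, ∀ᵐ x ∂(Measure.pi p), x i ∈ Set.Icc (a i) (b i) := fun i =>
      (hev i).quasiMeasurePreserving.ae (hae i _ (hp i))
    refine le_integral_of_mean_le (Measure.pi p) hf hmono (X := fun x => ∑ i, x i)
      (c := ∑ i, a i) (d := ∑ i, b i)
      (by fun_prop) ?_ ?_ t
    · filter_upwards [ae_all_iff.mpr hbd] with x hx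
      exact ⟨Finset.sum_le_sum fun i _ => (hx i).1, Finset.sum_le_sum fun i _ => (hx i).2⟩
    · rw [integral_finsetSum _ fun i _ =>
        Integrable.of_mem_Icc (a i) (b i) (measurable_pi_apply i).aemeasurable (hbd i)]
      refine Finset.sum_le_sum fun i _ => ?_
      have h : ∫ x, x i ∂(Measure.pi p) = ∫ y, y ∂(p i) :=
        integral_comp_eval (μ := p) (i := i) (f := fun y : ℝ => y)
          measurable_id.aestronglyMeasurable
      rw [h]
      exact hmean i _ (hp i)
end

section
/- Let K ≥ 1 and n ≥ 1. For each i = 1,…,n let a_i ≤ b_i be real numbers with a_i ≥ 0, let m_{i,1}, …, m_{i,K} be real numbers, and let P_i := { p : p is a Borel probability measure on [a_i, b_i] with ∫ x^k dp(x) = m_{i,k} for k = 1,…,K }; assume each P_i is nonempty. Let f : ℝ → ℝ be (K+1)-times continuously differentiable with either f^{(K+1)}(t) > 0 for all t ∈ ℝ, or f^{(K+1)}(t) < 0 for all t ∈ ℝ. Define v_{n+1} := f and, backwards for i = n, …, 1, define v_i(t) := inf_{p ∈ P_i} ∫ v_{i+1}(t − x) dp(x). Then each v_i is continuous on ℝ,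 and for every t ∈ ℝ, v_1(t) = inf_{(p_1,…,p_n) ∈ P_1 × ⋯ × P_n} ∫ f(t − (x_1 + ⋯ + x_n)) d(p_1 ⊗ ⋯ ⊗ p_n)(x_1,…,x_n). -/
open MeasureTheory

/-!
The sequential adversary gains nothing over the static one because, for each moment set, a single
measure minimises `∫ h` simultaneously over all `h` whose derivative of order `K + 1` has a
prescribed weak sign `σ` (a principal representation in the sense of Chebyshev, Markov and
Krein). The worst-case measure on an arc therefore does not depend on the remaining budget.

To produce it, consider the convex hull `C` of the moment curve `x ↦ (x, …, x ^ (K + 1))` over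
`[a, b]`, which is compact. Among the points of `C` whose first `K` coordinates are the given
moments, let `c` minimise `σ` times the last coordinate. Then `c` is a boundary point of `C`, and a
supporting functional at `c` (`exists_support`) is a nonzero polynomial `W` of degree at most
`K + 1`, nonnegative on `[a, b]`, whose coefficient of order `K + 1` has sign `σ`. Writing `c` as a
convex combination of points of the curve gives a finitely supported measure `p` with `∫ W dp = 0`,
so `p` lives on the zeros of `W`. From these zeros one extracts `K + 1` nodes `s` such that
`σ * ∏ (x - s_i) ≥ 0` on `[a, b]` (`exists_nodes`). For `h` as above, Hermite interpolation at
these nodes (`hermite`) yields `h = Q + ∏ (x - s_i) * g` with `deg Q ≤ K` and `σ * g ≥ 0`. Hence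
`Q ≤ h` on `[a, b]` with equality on the support of `p`, and for every `q` with the same moments
`∫ h dp = ∫ Q dp = ∫ Q dq ≤ ∫ h dq` (`exists_optimal`).

No distinction between interior and boundary points of the moment space is needed: in the
degenerate case `W` has degree at most `K`, and the spare nodes are placed at the endpoints.

Since `p` is finitely supported, each value function is a nonnegative combination of translates
of the next one, so smoothness and the sign of the derivative of order `K + 1` propagate backwards
through the recursion. Iterating the one-step inequality with Fubini (`le_integral_pi`) compares
`v 0` with the product integrals, and the optimal measures give equality.
-/

/-! ### Convex geometry -/

/-- By Carathéodory, the hull is a finite union of continuous images of the compact sets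
`stdSimplex × s ^ k`, `k ≤ dim E + 1`. -/

theorem isCompact_convexHull_of_isCompact {E : Type*} [NormedAddCommGroup E] [NormedSpace ℝ E]
    [FiniteDimensional ℝ E] {s : Set E} (hs : IsCompact s) : IsCompact (convexHull ℝ s) := by
  have key : convexHull ℝ s = ⋃ k ∈ Set.Iic (Module.finrank ℝ E + 1),
      (fun y : (Fin k → ℝ) × (Fin k → E) => ∑ i, y.1 i • y.2 i) ''
        (stdSimplex ℝ (Fin k) ×ˢ Set.pi Set.univ fun _ => s) := by
    apply Set.Subset.antisymm
    · intro x hx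
      obtain ⟨ι, hι, z, w, hz, hind, hw, hw1, rfl⟩ := eq_pos_convex_span_of_mem_convexHull hx
      have hcard := hind.card_le_finrank_succ
      have e := Fintype.equivFin ι
      simp only [Set.mem_iUnion]
      refine ⟨Fintype.card ι, ?_, (w ∘ e.symm, z ∘ e.symm), ⟨⟨fun i => (hw _).le, ?_⟩, ?_⟩, ?_⟩
      · exact hcard.trans (Nat.succ_le_succ (Submodule.finrank_le _))
      · simpa using (Equiv.sum_comp e.symm w).trans hw1
      · exact fun i _ => hz ⟨_, rfl⟩
      · exact Equiv.sum_comp e.symm (fun i => w i • z i)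
    · intro x hx
      simp only [Set.mem_iUnion] at hx
      obtain ⟨k, -, ⟨w, z⟩, ⟨⟨hw, hw1⟩, hz⟩, rfl⟩ := hx
      exact (convex_convexHull ℝ s).sum_mem (fun i _ => hw i) hw1
        (fun i _ => subset_convexHull ℝ s (hz i trivial))
  rw [key]
  refine (Set.finite_Iic _).isCompact_biUnion fun k _ => ?_
  refine ((isCompact_stdSimplex ℝ (Fin k)).prod (isCompact_univ_pi fun _ => hs)).image ?_
  fun_prop

/-- A supporting functional `L` at a point `c` that leaves `C` in the direction `-e`, with the extra
information `0 ≤ L e`. It is a limit of normalised functionals separating `c - ε • e` from `C`; each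
of these is positive at `e` because it separates `c - ε • e` from `c` itself. -/
theorem exists_support {E : Type*} [NormedAddCommGroup E] [NormedSpace ℝ E]
    [FiniteDimensional ℝ E] {C : Set E} (hC : IsClosed C) (hconv : Convex ℝ C) {c e : E}
    (hc : c ∈ C) (he : ∀ ε : ℝ, 0 < ε → c - ε • e ∉ C) :
    ∃ L : E →L[ℝ] ℝ, L ≠ 0 ∧ 0 ≤ L e ∧ ∀ y ∈ C, L c ≤ L y := by
  have hsep : ∀ n : ℕ, ∃ L : E →L[ℝ] ℝ, L ∈ Metric.sphere (0 : E →L[ℝ] ℝ) 1 ∧ 0 ≤ L e ∧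
      ∀ y ∈ C, L c - (1 / ((n : ℝ) + 1)) * L e ≤ L y := by
    intro n
    have hε : 0 < 1 / ((n : ℝ) + 1) := by positivity
    obtain ⟨L, u, h1, h2⟩ := geometric_hahn_banach_point_closed hconv hC (he _ hε)
    simp only [map_sub, map_smul, smul_eq_mul] at h1
    have hLe : 0 < L e := by
      have := h2 c hc
      exact pos_of_mul_pos_right (a := 1 / ((n : ℝ) + 1)) (by linarith) hε.le
    have hL : L ≠ 0 := by rintro rfl; simp at hLe
    have hn : 0 < ‖L‖ := norm_pos_iff.2 hL
    refine ⟨‖L‖⁻¹ • L, ?_, ?_, fun y hy => ?_⟩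
    · simp [norm_smul, hn.ne']
    · simp only [smul_apply, smul_eq_mul]; positivity
    · simp only [smul_apply, smul_eq_mul]
      have := mul_le_mul_of_nonneg_left (h1.trans (h2 y hy)).le (inv_pos.2 hn).le
      linarith
  choose M hM1 hM2 hM3 using hsep
  obtain ⟨L, hL, φ, hφ, hlim⟩ := (isCompact_sphere (0 : E →L[ℝ] ℝ) 1).tendsto_subseq hM1
  have hev : ∀ x : E, Filter.Tendsto (fun n => M (φ n) x) Filter.atTop (nhds (L x)) := fun x =>
    ((ContinuousLinearMap.apply ℝ ℝ x).continuous.tendsto L).comp hlim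
  refine ⟨L, ?_, ge_of_tendsto' (hev e) fun n => hM2 _, fun y hy => ?_⟩
  · rintro rfl; simp at hL
  · have h0 : Filter.Tendsto (fun n => 1 / ((φ n : ℝ) + 1)) Filter.atTop (nhds 0) :=
      tendsto_one_div_add_atTop_nhds_zero_nat.comp hφ.tendsto_atTop
    have := (hev c).sub (h0.mul (hev e))
    rw [zero_mul, sub_zero] at this
    exact le_of_tendsto_of_tendsto' this (hev y) fun n => hM3 _ y hy

/-! ### Hermite interpolation -/

/-- Differentiation under the integral sign: every derivative in `x` produces one factor `s`. -/
theorem contDiff_average (m : ℕ) : ∀ (k : ℕ) (φ : ℝ → ℝ) (z : ℝ), ContDiff ℝ m φ →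
    ContDiff ℝ m (fun x => ∫ s in (0:ℝ)..1, s ^ k * φ (z + s * (x - z))) ∧
    iteratedDeriv m (fun x => ∫ s in (0:ℝ)..1, s ^ k * φ (z + s * (x - z))) =
      fun x => ∫ s in (0:ℝ)..1, s ^ (k + m) * iteratedDeriv m φ (z + s * (x - z)) := by
  induction m with
  | zero =>
    intro k φ z hφ
    have hc : Continuous φ := hφ.continuous
    refine ⟨?_, by simp⟩
    rw [Nat.cast_zero, contDiff_zero]
    apply intervalIntegral.continuous_parametric_intervalIntegral_of_continuous'
    simp only [Function.uncurry_def]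
    fun_prop
  | succ m ih =>
    intro k φ z hφ
    rw [Nat.cast_succ, contDiff_succ_iff_deriv] at hφ
    obtain ⟨hd, -, hφ'⟩ := hφ
    obtain ⟨ih1, ih2⟩ := ih (k + 1) (deriv φ) z hφ'
    have hc : Continuous φ := hd.continuous
    have hc' : Continuous (deriv φ) := hφ'.continuous
    have hder : ∀ x, HasDerivAt (fun x => ∫ s in (0:ℝ)..1, s ^ k * φ (z + s * (x - z)))
        (∫ s in (0:ℝ)..1, s ^ (k + 1) * deriv φ (z + s * (x - z))) x := by
      intro x
      have hG : Continuous fun y : ℝ × ℝ => y.2 ^ (k + 1) * deriv φ (z + y.2 * (y.1 - z)) := by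
        fun_prop
      obtain ⟨B, hB⟩ := ((isCompact_closedBall x 1).prod
        (isCompact_Icc (a := (0:ℝ)) (b := 1))).exists_bound_of_continuousOn hG.continuousOn
      refine (intervalIntegral.hasDerivAt_integral_of_dominated_loc_of_deriv_le
        (F := fun x s => s ^ k * φ (z + s * (x - z)))
        (F' := fun x s => s ^ (k + 1) * deriv φ (z + s * (x - z)))
        (bound := fun _ => B) (Metric.closedBall_mem_nhds x one_pos) ?_ ?_ ?_ ?_ ?_ ?_).2
      · exact Filter.Eventually.of_forall fun y =>
          Continuous.aestronglyMeasurable (by fun_prop)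
      · exact Continuous.intervalIntegrable (by fun_prop) _ _
      · exact Continuous.aestronglyMeasurable (by fun_prop)
      · refine Filter.Eventually.of_forall fun s hs y hy => ?_
        rw [Set.uIoc_of_le zero_le_one] at hs
        exact hB (y, s) ⟨hy, hs.1.le, hs.2⟩
      · exact intervalIntegrable_const
      · refine Filter.Eventually.of_forall fun s hs y hy => ?_
        have h1 : HasDerivAt (fun x => z + s * (x - z)) s y := by
          simpa using (((hasDerivAt_id y).sub_const z).const_mul s).const_add z
        have h2 := ((hd (z + s * (y - z))).hasDerivAt.comp y h1).const_mul (s ^ k)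
        exact h2.congr_deriv (by ring)
    have hderiv := funext fun x => (hder x).deriv
    constructor
    · rw [Nat.cast_succ, contDiff_succ_iff_deriv]
      refine ⟨fun x => (hder x).differentiableAt, fun h => by simp at h, ?_⟩
      rw [hderiv]; exact ih1
    · rw [iteratedDeriv_succ', hderiv, ih2]
      ext x
      simp only [iteratedDeriv_succ', add_assoc, add_comm 1 m]

/-- Hermite interpolation of `h` at the nodes `s`, repeated according to multiplicity, with the sign
of the remainder. The induction applies Hadamard's lemma `h x = h z + (x - z) * h₁ x` with
`h₁ x = ∫ s in 0..1, deriv h (z + s * (x - z))`, whose derivatives inherit their sign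
from the next derivatives of `h`. -/
theorem hermite (s : List ℝ) : ∀ (σ : ℝ) (h : ℝ → ℝ), ContDiff ℝ (s.length : ℕ) h →
    (∀ x, 0 ≤ σ * iteratedDeriv s.length h x) →
    ∃ (Q : Polynomial ℝ) (g : ℝ → ℝ), Q.degree < s.length ∧ (∀ x, 0 ≤ σ * g x) ∧
      ∀ x, h x = Q.eval x + (s.map (fun z => x - z)).prod * g x := by
  induction s with
  | nil =>
    intro σ h hc hs
    exact ⟨0, h, by simp, by simpa using hs, by simp⟩
  | cons z s ih =>
    intro σ h hc hs
    rw [List.length_cons] at hc hs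
    rw [Nat.cast_succ, contDiff_succ_iff_deriv] at hc
    obtain ⟨hd, -, hc'⟩ := hc
    obtain ⟨h1, h2⟩ := contDiff_average s.length 0 (deriv h) z hc'
    have hc1 : Continuous (deriv h) := hc'.continuous
    simp only [pow_zero, one_mul, zero_add] at h1 h2
    obtain ⟨Q, g, hQ, hg, hQg⟩ := ih σ _ h1 (by
      intro x
      rw [h2]
      simp only
      rw [← intervalIntegral.integral_const_mul]
      refine intervalIntegral.integral_nonneg zero_le_one fun u hu => ?_
      have := mul_nonneg (pow_nonneg hu.1 s.length) (hs (z + u * (x - z)))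
      rw [iteratedDeriv_succ'] at this
      linarith)
    refine ⟨Polynomial.C (h z) + (Polynomial.X - Polynomial.C z) * Q, g, ?_, hg, fun x => ?_⟩
    · refine (Polynomial.degree_add_le _ _).trans_lt (max_lt ?_ ?_)
      · exact Polynomial.degree_C_le.trans_lt (by rw [List.length_cons]; exact_mod_cast Nat.succ_pos _)
      · rw [Polynomial.degree_mul, Polynomial.degree_X_sub_C, List.length_cons, Nat.cast_succ, add_comm]
        by_cases hQ0 : Q = 0
        · subst hQ0; simp
        · rw [Polynomial.degree_eq_natDegree hQ0] at hQ ⊢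
          exact_mod_cast Nat.succ_lt_succ (by exact_mod_cast hQ)
    · have := intervalIntegral.integral_unitInterval_deriv_eq_sub (f := h) (f' := deriv h)
        (z₀ := z) (z₁ := x - z) (Continuous.continuousOn (by fun_prop))
        (fun t _ => (hd _).hasDerivAt)
      simp only [smul_eq_mul] at this
      rw [hQg x] at this
      simp only [Polynomial.eval_add, Polynomial.eval_C, Polynomial.eval_mul, Polynomial.eval_sub,
        Polynomial.eval_X, List.map_cons, List.prod_cons]
      rw [add_sub_cancel] at this
      linarith

/-! ### Nodes of a nonnegative polynomial -/

/-- All roots lying in `S` can be split off with their multiplicities. -/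
theorem exists_factorization (S : Set ℝ) (d : ℕ) : ∀ w : Polynomial ℝ, w ≠ 0 → w.natDegree = d →
    ∃ (s : List ℝ) (u : Polynomial ℝ), w = (s.map fun z => Polynomial.X - Polynomial.C z).prod * u ∧
      s.length + u.natDegree = w.natDegree ∧ ∀ x ∈ S, u.eval x ≠ 0 := by
  induction d with
  | zero =>
    intro w hw hd
    refine ⟨[], w, by simp, by simp, fun x _ hx => hw ?_⟩
    rw [Polynomial.eq_C_of_natDegree_eq_zero hd] at hx ⊢
    simpa using hx
  | succ d ih =>
    intro w hw hd
    by_cases h : ∃ z ∈ S, w.eval z = 0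
    · obtain ⟨z, -, hz⟩ := h
      obtain ⟨w', rfl⟩ := Polynomial.dvd_iff_isRoot.2 hz
      have hw' : w' ≠ 0 := right_ne_zero_of_mul hw
      have hdeg : ((Polynomial.X - Polynomial.C z) * w').natDegree = 1 + w'.natDegree := by
        rw [Polynomial.natDegree_mul (Polynomial.X_sub_C_ne_zero z) hw',
          Polynomial.natDegree_X_sub_C]
      obtain ⟨s, u, h1, h2, h3⟩ := ih w' hw' (by omega)
      refine ⟨z :: s, u, ?_, ?_, h3⟩
      · rw [List.map_cons, List.prod_cons, mul_assoc, ← h1]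
      · rw [hdeg, List.length_cons]; omega
    · push Not at h
      exact ⟨[], w, by simp, by simp, h⟩

theorem eval_prod_nodes (s : List ℝ) (x : ℝ) :
    ((s.map fun z => Polynomial.X - Polynomial.C z).prod).eval x =
      (s.map fun z => x - z).prod := by
  induction s with
  | nil => simp
  | cons z s ih => simp [ih]

theorem prod_nodes_monic (s : List ℝ) :
    ((s.map fun z => Polynomial.X - Polynomial.C z).prod).Monic := by
  induction s with
  | nil => simp
  | cons z s ih => simpa using (Polynomial.monic_X_sub_C z).mul ih

/-- The zeros in `[a, b]` of a polynomial that is nonnegative there, completed by endpoints to exactly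
`N` nodes whose nodal polynomial has sign `σ` on `[a, b]`. The condition on `w.coeff N` matters
only when there is no room to add an endpoint, that is when all `N` roots already lie in
`[a, b]`. -/
theorem exists_nodes {a b σ : ℝ} {N : ℕ} {w : Polynomial ℝ} (hw : w ≠ 0)
    (hdeg : w.natDegree ≤ N) (hσ : 0 ≤ σ * w.coeff N)
    (hnn : ∀ x ∈ Set.Icc a b, 0 ≤ w.eval x) :
    ∃ s : List ℝ, s.length = N ∧ (∀ x ∈ Set.Icc a b, w.eval x = 0 → x ∈ s) ∧
      ∀ x ∈ Set.Icc a b, 0 ≤ σ * (s.map fun z => x - z).prod := by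
  obtain ⟨s, u, hsu, hlen, hu⟩ := exists_factorization (Set.Icc a b) _ w hw rfl
  have heval : ∀ x, w.eval x = (s.map fun z => x - z).prod * u.eval x := by
    intro x
    conv_lhs => rw [hsu]
    rw [Polynomial.eval_mul, eval_prod_nodes]
  have hzero : ∀ x ∈ Set.Icc a b, w.eval x = 0 → x ∈ s := by
    intro x hx h0
    rw [heval] at h0
    have := (mul_eq_zero.1 h0).resolve_right (hu x hx)
    rw [List.prod_eq_zero_iff, List.mem_map] at this
    obtain ⟨z, hz, hxz⟩ := this
    rwa [sub_eq_zero.1 hxz]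
  -- `u` keeps a constant sign on the interval, by the intermediate value theorem
  obtain ⟨τ, hτ, hτu⟩ : ∃ τ : ℝ, τ ≠ 0 ∧ ∀ x ∈ Set.Icc a b, 0 < τ * u.eval x := by
    by_cases hpos : ∀ x ∈ Set.Icc a b, 0 < u.eval x
    · exact ⟨1, one_ne_zero, by simpa using hpos⟩
    · push Not at hpos
      obtain ⟨y, hy, hyu⟩ := hpos
      refine ⟨-1, by norm_num, fun x hx => ?_⟩
      by_contra hcon
      have hxu : 0 ≤ u.eval x := by linarith
      obtain ⟨z, hz, hz0⟩ := isPreconnected_Icc.intermediate_value hy hx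
        u.continuous.continuousOn ⟨hyu, hxu⟩
      exact hu z hz hz0
  have hτs : ∀ x ∈ Set.Icc a b, 0 ≤ τ * (s.map fun z => x - z).prod := by
    intro x hx
    have h1 := hnn x hx
    rw [heval] at h1
    refine nonneg_of_mul_nonneg_left (b := τ * u.eval x) ?_ (hτu x hx)
    nlinarith [mul_nonneg (sq_nonneg τ) h1]
  -- a sign discrepancy between `σ` and `τ` is absorbed by using `b` rather than `a` as a node
  by_cases hστ : 0 ≤ σ * τ
  · refine ⟨s ++ List.replicate (N - s.length) a, by simp; omega,
      fun x hx h0 => List.mem_append_left _ (hzero x hx h0), fun x hx => ?_⟩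
    rw [List.map_append, List.prod_append, List.map_replicate, List.prod_replicate]
    have h1 := mul_nonneg (mul_nonneg hστ (hτs x hx))
      (pow_nonneg (sub_nonneg.2 hx.1) (N - s.length))
    refine nonneg_of_mul_nonneg_left (b := τ ^ 2) ?_ (by positivity)
    linarith
  · push Not at hστ
    -- with `N` roots in the interval, `u` is the constant `w.coeff N`, of the sign of `σ`
    have hlt : s.length < N ∨ ∀ x ∈ Set.Icc a b, False := by
      by_contra! hcon
      obtain ⟨hN, x, hx, -⟩ := hcon
      have hu0 : u.natDegree = 0 := by omega
      have hsN : s.length = N := by omega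
      have hc : w.coeff N = u.eval x := by
        have h2 : w.natDegree = N := by omega
        rw [← h2, ← Polynomial.leadingCoeff, hsu, Polynomial.leadingCoeff_monic_mul
          (prod_nodes_monic s), Polynomial.leadingCoeff, hu0]
        conv_rhs => rw [Polynomial.eq_C_of_natDegree_eq_zero hu0]
        simp
      rw [hc] at hσ
      have h3 := hτu x hx
      nlinarith [mul_pos (neg_pos.2 hστ) (sq_pos_of_ne_zero (hu x hx)),
        mul_nonneg hσ h3.le, sq_pos_of_ne_zero hτ, mul_nonneg (sq_nonneg τ) hσ]
    rcases hlt with hlt | hemp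
    · refine ⟨s ++ b :: List.replicate (N - s.length - 1) a, by simp; omega,
        fun x hx h0 => List.mem_append_left _ (hzero x hx h0), fun x hx => ?_⟩
      rw [List.map_append, List.prod_append, List.map_cons, List.prod_cons, List.map_replicate,
        List.prod_replicate]
      have h1 := mul_nonneg (mul_nonneg (mul_nonneg (neg_pos.2 hστ).le (hτs x hx))
        (sub_nonneg.2 hx.2)) (pow_nonneg (sub_nonneg.2 hx.1) (N - s.length - 1))
      refine nonneg_of_mul_nonneg_left (b := τ ^ 2) ?_ (by positivity)
      linarith
    · refine ⟨s ++ List.replicate (N - s.length) a, by simp; omega,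
        fun x hx => (hemp x hx).elim, fun x hx => (hemp x hx).elim⟩

/-! ### Moment sets and finitely supported measures -/

/-- The probability measures on `[a, b]`, encoded as measures on `ℝ` that do not charge the
complement of `[a, b]`, with prescribed moments of orders `1, …, K`; `m k` is the moment of order
`k + 1`. -/
def momentSet (K : ℕ) (a b : ℝ) (m : Fin K → ℝ) : Set (Measure ℝ) :=
  { p | IsProbabilityMeasure p ∧ p (Set.Icc a b)ᶜ = 0 ∧
    ∀ k : Fin K, (∫ x, x ^ ((k : ℕ) + 1) ∂p) = m k }

theorem integrable_of_continuous {p : Measure ℝ} [IsFiniteMeasure p] {a b : ℝ}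
    (hp : p (Set.Icc a b)ᶜ = 0) {E : Type*} [NormedAddCommGroup E] {g : ℝ → E}
    [SecondCountableTopology E]
    (hg : Continuous g) : Integrable g p := by
  obtain ⟨B, hB⟩ := (isCompact_Icc (a := a) (b := b)).exists_bound_of_continuousOn hg.continuousOn
  refine Integrable.of_bound hg.aestronglyMeasurable B ?_
  filter_upwards [mem_ae_iff.2 hp] with x hx using hB x hx

theorem integral_poly_eq {K : ℕ} {a b : ℝ} {m : Fin K → ℝ} {p q : Measure ℝ}
    (hp : p ∈ momentSet K a b m) (hq : q ∈ momentSet K a b m) {Q : Polynomial ℝ}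
    (hQ : Q.degree < ((K + 1 : ℕ) : WithBot ℕ)) : ∫ x, Q.eval x ∂p = ∫ x, Q.eval x ∂q := by
  have hdeg : Q.natDegree < K + 1 := by
    by_cases h0 : Q = 0
    · simp [h0]
    · exact (Polynomial.natDegree_lt_iff_degree_lt h0).2 hQ
  have key : ∀ r ∈ momentSet K a b m, ∫ x, Q.eval x ∂r =
      ∑ i ∈ Finset.range (K + 1), Q.coeff i * ∫ x, x ^ i ∂r := by
    rintro r ⟨hr1, hr2, -⟩
    simp only [Polynomial.eval_eq_sum_range' hdeg]
    rw [integral_finsetSum _ fun i _ => integrable_of_continuous hr2 (by fun_prop)]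
    simp only [integral_const_mul]
  rw [key p hp, key q hq]
  obtain ⟨hp1, -, hp3⟩ := hp
  obtain ⟨hq1, -, hq3⟩ := hq
  refine Finset.sum_congr rfl fun i hi => ?_
  rcases i with _ | i
  · simp
  · have hi' : i < K := by simpa using hi
    rw [hp3 ⟨i, hi'⟩, hq3 ⟨i, hi'⟩]

/-- The measure with mass `w i` at the point `z i`; negative weights are truncated to zero. -/
noncomputable def discreteMeasure {ι : Type} [Fintype ι] (w z : ι → ℝ) : Measure ℝ :=
  ∑ i, ENNReal.ofReal (w i) • Measure.dirac (z i)

theorem integral_discreteMeasure {ι : Type} [Fintype ι] {w z : ι → ℝ} (hw : ∀ i, 0 ≤ w i)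
    (g : ℝ → ℝ) : ∫ x, g x ∂discreteMeasure w z = ∑ i, w i * g (z i) := by
  rw [discreteMeasure,
    integral_finsetSum_measure fun i _ => (integrable_dirac (by simp)).smul_measure (by simp)]
  simp [integral_smul_measure, hw]

theorem discreteMeasure_mem {ι : Type} [Fintype ι] {w z : ι → ℝ} {K : ℕ} {a b : ℝ}
    {m : Fin K → ℝ} (hw : ∀ i, 0 ≤ w i) (hw1 : ∑ i, w i = 1) (hz : ∀ i, z i ∈ Set.Icc a b)
    (hm : ∀ k : Fin K, ∑ i, w i * z i ^ ((k : ℕ) + 1) = m k) :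
    discreteMeasure w z ∈ momentSet K a b m := by
  refine ⟨⟨?_⟩, ?_, fun k => ?_⟩
  · simp [discreteMeasure, ← ENNReal.ofReal_sum_of_nonneg fun i _ => hw i, hw1]
  · have : ∀ i, ¬ (a ≤ z i → b < z i) := fun i h => (h (hz i).1).not_ge (hz i).2
    simp [discreteMeasure, Measure.dirac_apply', Set.indicator, this]
  · rw [integral_discreteMeasure hw]; exact hm k

/-! ### A common minimiser -/

/-- One finitely supported measure of the moment set minimises `∫ h` for all `h` whose derivative
of order `K + 1` has the weak sign `σ`. -/
theorem exists_optimal {K : ℕ} {a b : ℝ} {m : Fin K → ℝ} {σ : ℝ} (hσ : σ ≠ 0)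
    (hne : (momentSet K a b m).Nonempty) :
    ∃ (ι : Type) (_ : Fintype ι) (w z : ι → ℝ), (∀ i, 0 ≤ w i) ∧
      discreteMeasure w z ∈ momentSet K a b m ∧
      ∀ h : ℝ → ℝ, ContDiff ℝ (K + 1 : ℕ) h → (∀ x, 0 ≤ σ * iteratedDeriv (K + 1) h x) →
        ∀ q ∈ momentSet K a b m, ∫ x, h x ∂discreteMeasure w z ≤ ∫ x, h x ∂q := by
  set γ : ℝ → Fin (K + 1) → ℝ := fun x j => x ^ ((j : ℕ) + 1) with hγ
  have hγc : Continuous γ := by fun_prop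
  set C : Set (Fin (K + 1) → ℝ) := convexHull ℝ (γ '' Set.Icc a b) with hCdef
  have hC : IsCompact C := isCompact_convexHull_of_isCompact (isCompact_Icc.image hγc)
  have hCconv : Convex ℝ C := convex_convexHull ℝ _
  have hslice : IsCompact (C ∩ {c | ∀ k : Fin K, c k.castSucc = m k}) := by
    refine hC.inter_right ?_
    simp only [Set.ofPred_forall]
    exact isClosed_iInter fun k => isClosed_eq (by fun_prop) (by fun_prop)
  have hslne : (C ∩ {c | ∀ k : Fin K, c k.castSucc = m k}).Nonempty := by
    obtain ⟨q, hq1, hq2, hq3⟩ := hne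
    have hinteg : Integrable γ q := integrable_of_continuous hq2 hγc
    refine ⟨∫ x, γ x ∂q, hCconv.integral_mem hC.isClosed ?_ hinteg, fun k => ?_⟩
    · filter_upwards [mem_ae_iff.2 hq2] with x hx
        using subset_convexHull ℝ _ (Set.mem_image_of_mem γ hx)
    · rw [eval_integral fun j => hinteg.eval j]
      simpa [hγ] using hq3 k
  -- `c` is extremal: decreasing `σ` times its last coordinate leaves the hull
  obtain ⟨c, ⟨hcC, hcm⟩, hcmin⟩ := hslice.exists_isMinOn hslne
    (f := fun c => σ * c (Fin.last K)) (by fun_prop)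
  obtain ⟨L, hL0, hLe, hLmin⟩ := exists_support hC.isClosed hCconv hcC
    (e := Pi.single (Fin.last K) σ) (by
      intro ε hε hmem
      have := hcmin (a := c - ε • Pi.single (Fin.last K) σ) ⟨hmem, fun k => by
        simpa [Pi.single_apply, (Fin.castSucc_lt_last k).ne] using hcm k⟩
      simp only [Set.mem_ofPred_eq, Pi.sub_apply, Pi.smul_apply, Pi.single_eq_same,
        smul_eq_mul] at this
      have h2 : 0 < ε * σ ^ 2 := by positivity
      linarith)
  obtain ⟨ι, hι, w, y, hw, hw1, hy, hwy⟩ := mem_convexHull_iff_exists_fintype.1 hcC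
  choose z hz hzy using hy
  have hcj : ∀ j : Fin (K + 1), ∑ i, w i * z i ^ ((j : ℕ) + 1) = c j := by
    intro j
    rw [← hwy, Finset.sum_apply]
    exact Finset.sum_congr rfl fun i _ => by rw [← hzy]; simp [hγ]
  have hmem : discreteMeasure w z ∈ momentSet K a b m :=
    discreteMeasure_mem hw hw1 hz fun k => by rw [← hcm k, ← hcj]; simp
  refine ⟨ι, hι, w, z, hw, hmem, ?_⟩
  -- the supporting functional, read along the moment curve, as a polynomial
  set ℓ : Fin (K + 1) → ℝ := fun j => L (Pi.single j 1) with hℓ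
  have hLℓ : ∀ d, L d = ∑ j, ℓ j * d j := by
    intro d
    conv_lhs => rw [pi_eq_sum_univ' d]
    simp [hℓ, mul_comm]
  set W : Polynomial ℝ := ∑ j : Fin (K + 1), Polynomial.monomial ((j : ℕ) + 1) (ℓ j)
    - Polynomial.C (L c) with hW
  have hWeval : ∀ x, W.eval x = L (γ x) - L c := by
    intro x
    rw [hLℓ (γ x)]
    simp [hW, Polynomial.eval_finsetSum, hγ]
  have hWcoeff : ∀ j : Fin (K + 1), W.coeff ((j : ℕ) + 1) = ℓ j := by
    intro j
    simp [hW, Polynomial.coeff_monomial, Fin.val_inj]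
  have hW0 : W ≠ 0 := by
    intro h0
    apply hL0
    ext d
    have : ∀ j, ℓ j = 0 := fun j => by rw [← hWcoeff, h0, Polynomial.coeff_zero]
    simp [hLℓ, this]
  have hWdeg : W.natDegree ≤ K + 1 := by
    refine (Polynomial.natDegree_sub_le _ _).trans (max_le ?_ (by simp))
    refine Polynomial.natDegree_sum_le_of_forall_le _ _ fun j _ => ?_
    exact (Polynomial.natDegree_monomial_le _).trans (by omega)
  have hWσ : 0 ≤ σ * W.coeff (K + 1) := by
    have h1 := hWcoeff (Fin.last K)
    rw [Fin.val_last] at h1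
    rw [hLℓ] at hLe
    rw [h1]
    simpa [Pi.single_apply, mul_comm] using hLe
  have hWnn : ∀ x ∈ Set.Icc a b, 0 ≤ W.eval x := fun x hx => by
    rw [hWeval, sub_nonneg]
    exact hLmin _ (subset_convexHull ℝ _ (Set.mem_image_of_mem γ hx))
  have hWz : ∀ i, w i ≠ 0 → W.eval (z i) = 0 := by
    have hsum : ∑ i, w i * W.eval (z i) = 0 := by
      have h1 : ∑ i, w i * L (y i) = L c := by rw [← hwy]; simp
      simp only [hWeval, hzy, mul_sub, Finset.sum_sub_distrib, h1, ← Finset.sum_mul, hw1]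
      ring
    intro i hi
    have := (Finset.sum_eq_zero_iff_of_nonneg fun i _ =>
      mul_nonneg (hw i) (hWnn _ (hz i))).1 hsum i (Finset.mem_univ i)
    exact (mul_eq_zero.1 this).resolve_left hi
  obtain ⟨s, hs, hsz, hsσ⟩ := exists_nodes hW0 hWdeg hWσ hWnn
  intro h hh hhσ q hq
  obtain ⟨Q, g, hQ, hg, hQg⟩ := hermite s σ h (by rwa [hs]) (by rwa [hs])
  rw [hs] at hQ
  have hQle : ∀ x ∈ Set.Icc a b, Q.eval x ≤ h x := by
    intro x hx
    have h1 := mul_nonneg (hsσ x hx) (hg x)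
    have h2 : 0 < σ ^ 2 := by positivity
    have h3 : 0 ≤ (s.map fun z => x - z).prod * g x :=
      nonneg_of_mul_nonneg_right (a := σ ^ 2) (by linarith) h2
    linarith [hQg x]
  have hQz : ∀ i, w i * h (z i) = w i * Q.eval (z i) := by
    intro i
    by_cases hi : w i = 0
    · simp [hi]
    · have hzs : z i ∈ s := hsz _ (hz i) (hWz i hi)
      have : (s.map fun t => z i - t).prod = 0 :=
        List.prod_eq_zero (List.mem_map.2 ⟨z i, hzs, sub_self _⟩)
      rw [hQg, this]; ring
  have hq1 := hq.1
  calc ∫ x, h x ∂discreteMeasure w z = ∫ x, Q.eval x ∂discreteMeasure w z := by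
        rw [integral_discreteMeasure hw, integral_discreteMeasure hw]
        exact Finset.sum_congr rfl fun i _ => hQz i
    _ = ∫ x, Q.eval x ∂q := integral_poly_eq hmem hq hQ
    _ ≤ ∫ x, h x ∂q := by
        refine integral_mono_ae (integrable_of_continuous hq.2.1 Q.continuous)
          (integrable_of_continuous hq.2.1 hh.continuous) ?_
        filter_upwards [mem_ae_iff.2 hq.2.1] with x hx using hQle x hx

/-! ### Product measures and the recursion -/

theorem integrable_pi {n : ℕ} {a b : Fin n → ℝ} {p : Fin n → Measure ℝ}
    [∀ i, IsProbabilityMeasure (p i)] (hp : ∀ i, p i (Set.Icc (a i) (b i))ᶜ = 0)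
    {F : (Fin n → ℝ) → ℝ} (hF : Continuous F) : Integrable F (Measure.pi p) := by
  obtain ⟨B, hB⟩ := (isCompact_Icc (a := a) (b := b)).exists_bound_of_continuousOn hF.continuousOn
  refine Integrable.of_bound hF.aestronglyMeasurable B ?_
  have : ∀ᵐ x ∂Measure.pi p, ∀ i, x i ∈ Set.Icc (a i) (b i) := Filter.eventually_all.2 fun i =>
    Measure.tendsto_eval_ae_ae.eventually (mem_ae_iff.2 (hp i))
  filter_upwards [this] with x hx
  exact hB x ⟨fun i => (hx i).1, fun i => (hx i).2⟩

/-- Iterating the one-step inequality `v i t ≤ ∫ v (i + 1) (t - x) dp_i` along the path. -/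
theorem le_integral_pi_s6 (n : ℕ) : ∀ (a b : Fin n → ℝ) (p : Fin n → Measure ℝ)
    (_ : ∀ i, IsProbabilityMeasure (p i)) (_ : ∀ i, p i (Set.Icc (a i) (b i))ᶜ = 0)
    (v : Fin (n + 1) → ℝ → ℝ) (_ : ∀ i, Continuous (v i))
    (_ : ∀ (i : Fin n) (t : ℝ), v i.castSucc t ≤ ∫ x, v i.succ (t - x) ∂p i) (t : ℝ),
    v 0 t ≤ ∫ x : Fin n → ℝ, v (Fin.last n) (t - ∑ i, x i) ∂Measure.pi p := by
  induction n with
  | zero =>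
    intro a b p hp1 hp v hv hle t
    simp
  | succ n ih =>
    intro a b p hp1 hp v hv hle t
    have hmp := (measurePreserving_piFinSuccAbove p 0).symm
    have hinteg := integrable_pi hp (F := fun x => v (Fin.last (n + 1)) (t - ∑ i, x i))
      ((hv _).comp (by fun_prop))
    rw [← hmp.integrable_comp_emb (MeasurableEquiv.measurableEmbedding _)] at hinteg
    rw [← hmp.integral_comp']
    simp only [Fin.zero_succAbove] at hinteg ⊢
    have hprod := integral_prod _ hinteg
    have hinteg' := hinteg.integral_prod_left
    simp only [Function.comp_def, MeasurableEquiv.piFinSuccAbove_symm_apply, Fin.insertNthEquiv,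
      Fin.sum_univ_succ, Equiv.coe_fn_mk, Fin.insertNth_zero', Fin.cons_zero, Fin.cons_succ, ← sub_sub] at hprod hinteg' ⊢
    rw [hprod]
    refine (hle 0 t).trans (integral_mono (integrable_of_continuous (hp 0)
      ((hv _).comp (by fun_prop))) hinteg' fun x => ?_)
    exact ih (a ∘ Fin.succ) (b ∘ Fin.succ) (fun i => p i.succ) (fun i => hp1 _) (fun i => hp _)
      (fun i => v i.succ) (fun i => hv _) (fun i s => hle i.succ s) (t - x)

/-- On a single path with moment-based ambiguity sets (exact first `K` moments on
compact intervals of nonnegative reals) and a risk function whose `(K+1)`-st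
derivative has constant sign, the value functions of the backwards (sequential)
worst-case recursion are continuous and the sequential worst case equals the
static worst case over product measures. -/
theorem robust_moment_path_rectangular_equivalence
    (K n : ℕ) (hK : 1 ≤ K) (hn : 1 ≤ n)
    (a b : Fin n → ℝ) (hab : ∀ i, a i ≤ b i) (ha : ∀ i, 0 ≤ a i)
    (mom : Fin n → Fin K → ℝ)
    (P : Fin n → Set (Measure ℝ))
    (hPdef : ∀ i, P i = { p | IsProbabilityMeasure p ∧ p (Set.Icc (a i) (b i))ᶜ = 0 ∧
      ∀ k : Fin K, (∫ x, x ^ ((k : ℕ) + 1) ∂p) = mom i k })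
    (hPne : ∀ i, (P i).Nonempty)
    (f : ℝ → ℝ) (hf : ContDiff ℝ (K + 1 : ℕ) f)
    (hsign : (∀ t : ℝ, 0 < iteratedDeriv (K + 1) f t) ∨
      (∀ t : ℝ, iteratedDeriv (K + 1) f t < 0))
    (v : Fin (n + 1) → ℝ → ℝ)
    (hvlast : v (Fin.last n) = f)
    (hvrec : ∀ (i : Fin n) (t : ℝ),
      v i.castSucc t = sInf { w | ∃ p ∈ P i, w = ∫ x, v i.succ (t - x) ∂p }) :
    (∀ i, Continuous (v i)) ∧
    (∀ t : ℝ,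
      v 0 t = sInf { w | ∃ p : Fin n → Measure ℝ, (∀ i, p i ∈ P i) ∧
        w = ∫ x : Fin n → ℝ, f (t - ∑ i, x i) ∂(Measure.pi p) }) := by
  have hP : ∀ i, P i = momentSet K (a i) (b i) (mom i) := hPdef
  simp only [hP] at hPne hvrec ⊢
  obtain ⟨s, hs0, hs⟩ : ∃ s : ℝ, s ≠ 0 ∧ ∀ t, 0 ≤ s * iteratedDeriv (K + 1) f t := by
    rcases hsign with h | h
    · exact ⟨1, one_ne_zero, fun t => by linarith [h t]⟩
    · exact ⟨-1, by norm_num, fun t => by linarith [h t]⟩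
  -- the reflection `x ↦ t - x` multiplies the sign of the derivative by `(-1) ^ (K + 1)`
  have hσ : s * (-1) ^ (K + 1) ≠ 0 := mul_ne_zero hs0 (pow_ne_zero _ (by norm_num))
  choose ι hι w z hw hmem hopt using fun i => exists_optimal hσ (hPne i)
  have hstep : ∀ i : Fin n, ContDiff ℝ (K + 1 : ℕ) (v i.succ) →
      (∀ t, 0 ≤ s * iteratedDeriv (K + 1) (v i.succ) t) → ∀ t,
      (∀ q ∈ momentSet K (a i) (b i) (mom i), v i.castSucc t ≤ ∫ x, v i.succ (t - x) ∂q) ∧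
      v i.castSucc t = ∫ x, v i.succ (t - x) ∂discreteMeasure (w i) (z i) := by
    intro i hc hd t
    have hle := hopt i (fun x => v i.succ (t - x)) (hc.comp (by fun_prop)) (by
      intro x
      rw [iteratedDeriv_comp_const_sub]
      have h1 : ((-1 : ℝ) ^ (K + 1)) * (-1) ^ (K + 1) = 1 := by
        rw [← mul_pow]; norm_num
      calc 0 ≤ s * iteratedDeriv (K + 1) (v i.succ) (t - x) := hd _
        _ = s * (((-1 : ℝ) ^ (K + 1)) * (-1) ^ (K + 1)) *
            iteratedDeriv (K + 1) (v i.succ) (t - x) := by rw [h1, mul_one]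
        _ = _ := by simp only [smul_eq_mul]; ring)
    have heq : v i.castSucc t = ∫ x, v i.succ (t - x) ∂discreteMeasure (w i) (z i) := by
      rw [hvrec]
      refine IsLeast.csInf_eq ⟨⟨_, hmem i, rfl⟩, ?_⟩
      rintro _ ⟨q, hq, rfl⟩
      exact hle q hq
    exact ⟨fun q hq => heq ▸ hle q hq, heq⟩
  have hinv : ∀ i, ContDiff ℝ (K + 1 : ℕ) (v i) ∧
      ∀ t, 0 ≤ s * iteratedDeriv (K + 1) (v i) t := by
    intro i
    induction i using Fin.reverseInduction with
    | last => rw [hvlast]; exact ⟨hf, hs⟩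
    | cast i ih =>
      obtain ⟨hc, hd⟩ := ih
      have hvi : v i.castSucc = fun t => ∑ j, w i j * v i.succ (t - z i j) := by
        ext t
        rw [(hstep i hc hd t).2, integral_discreteMeasure (hw i)]
      have hcj : ∀ j, ContDiff ℝ (K + 1 : ℕ) fun t => v i.succ (t - z i j) := fun j =>
        hc.comp (by fun_prop)
      rw [hvi]
      refine ⟨ContDiff.sum fun j _ => contDiff_const.mul (hcj j), fun t => ?_⟩
      rw [iteratedDeriv_fun_sum fun j _ => (contDiff_const.mul (hcj j)).contDiffAt,
        Finset.mul_sum]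
      refine Finset.sum_nonneg fun j _ => ?_
      rw [iteratedDeriv_const_mul _ (hcj j).contDiffAt, iteratedDeriv_comp_sub_const]
      linarith [mul_nonneg (hw i j) (hd (t - z i j))]
  have hcont : ∀ i, Continuous (v i) := fun i => (hinv i).1.continuous
  refine ⟨hcont, fun t => ?_⟩
  rw [← hvlast]
  symm
  refine IsLeast.csInf_eq ⟨⟨fun i => discreteMeasure (w i) (z i), hmem, le_antisymm ?_ ?_⟩, ?_⟩
  · exact le_integral_pi_s6 n a b _ (fun i => (hmem i).1) (fun i => (hmem i).2.1) v hcont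
      (fun i t => ((hstep i (hinv _).1 (hinv _).2 t).2).le) t
  · -- the reverse inequality is the same statement for the negated value functions
    have := le_integral_pi_s6 n a b _ (fun i => (hmem i).1) (fun i => (hmem i).2.1)
      (fun i t => -v i t) (fun i => (hcont i).neg)
      (fun i t => by rw [integral_neg, (hstep i (hinv _).1 (hinv _).2 t).2]) t
    rw [integral_neg] at this
    exact neg_le_neg_iff.1 this
  · rintro _ ⟨p, hp, rfl⟩
    exact le_integral_pi_s6 n a b p (fun i => (hp i).1) (fun i => (hp i).2.1) v hcont
      (fun i t => (hstep i (hinv _).1 (hinv _).2 t).1 _ (hp i)) t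
end

section
/- Let n ≥ 1. For each i = 1,…,n let a_i ≤ b_i be real numbers and let P_i be a nonempty set of Borel probability measures on [a_i, b_i]. Then for every t ∈ ℝ, inf_{(p_1,…,p_n) ∈ P_1 × ⋯ × P_n} ∫ exp(t − (x_1 + ⋯ + x_n)) d(p_1 ⊗ ⋯ ⊗ p_n)(x_1,…,x_n) = exp(t) · ∏_{i=1}^{n} ( inf_{p ∈ P_i} ∫ exp(−x) dp(x) ). -/
/-!
By Fubini, for a product of probability measures the expectation of `exp (t - ∑ i, x i)` is
`exp t * ∏ i, ∫ exp (-x) ∂(p i)`. The factors are nonnegative and the `p i` range independently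
over the sets `P i`, so the infimum commutes with the product: the product of the infima is a
lower bound by monotonicity, and it is the limit of the products along sequences minimizing each
factor. The two ingredients are `integral_exp_sub_sum_pi` and `isGLB_mul_prod`.
-/

open MeasureTheory

theorem integral_exp_sub_sum_pi {n : ℕ} (p : Fin n → Measure ℝ)
    (hp : ∀ i, IsProbabilityMeasure (p i)) (t : ℝ) :
    ∫ x : Fin n → ℝ, Real.exp (t - ∑ i, x i) ∂(Measure.pi p) =
      Real.exp t * ∏ i, ∫ x, Real.exp (-x) ∂(p i) := by
  rw [← integral_fintype_prod_eq_prod (fun _ x => Real.exp (-x)), ← integral_const_mul]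
  congr 1 with x
  rw [← Real.exp_sum, ← Real.exp_add, Finset.sum_neg_distrib, sub_eq_add_neg]

/-- Over independent choices from nonempty sets of nonnegative reals, the infimum of a product is
the product of the infima (up to a nonnegative constant factor). -/
theorem isGLB_mul_prod {n : ℕ} {c : ℝ} (hc : 0 ≤ c) (S : Fin n → Set ℝ)
    (hne : ∀ i, (S i).Nonempty) (hS : ∀ i, ∀ u ∈ S i, 0 ≤ u) :
    IsGLB {w | ∃ u : Fin n → ℝ, (∀ i, u i ∈ S i) ∧ w = c * ∏ i, u i}
      (c * ∏ i, sInf (S i)) := by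
  have hbdd : ∀ i, BddBelow (S i) := fun i => ⟨0, fun u hu => hS i u hu⟩
  constructor
  · rintro w ⟨u, hu, rfl⟩
    exact mul_le_mul_of_nonneg_left (Finset.prod_le_prod
      (fun i _ => Real.sInf_nonneg (hS i)) (fun i _ => csInf_le (hbdd i) (hu i))) hc
  · intro l hl
    choose u _ hlim hmem using fun i => exists_seq_tendsto_sInf (hne i) (hbdd i)
    exact ge_of_tendsto' ((tendsto_finsetProd Finset.univ fun i _ => hlim i).const_mul c)
      fun k => hl ⟨fun i => u i k, fun i => hmem i k, rfl⟩

/-- For the exponential risk function `f t = exp t`, the worst-case expected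
exponential utility along a path over product measures drawn from ambiguity sets
factorizes into the product of per-arc worst cases. -/
theorem robust_exponential_path_worst_case
    (n : ℕ) (hn : 1 ≤ n) (a b : Fin n → ℝ) (hab : ∀ i, a i ≤ b i)
    (P : Fin n → Set (Measure ℝ)) (hPne : ∀ i, (P i).Nonempty)
    (hP : ∀ i, ∀ p ∈ P i, IsProbabilityMeasure p ∧ p (Set.Icc (a i) (b i))ᶜ = 0)
    (t : ℝ) :
    sInf { w | ∃ p : Fin n → Measure ℝ, (∀ i, p i ∈ P i) ∧
        w = ∫ x : Fin n → ℝ, Real.exp (t - ∑ i, x i) ∂(Measure.pi p) } =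
      Real.exp t * ∏ i, sInf { w | ∃ p ∈ P i, w = ∫ x, Real.exp (-x) ∂p } := by
  have hGLB := isGLB_mul_prod (Real.exp_pos t).le
    (fun i => {w | ∃ p ∈ P i, w = ∫ x, Real.exp (-x) ∂p})
    (fun i => (hPne i).elim fun p hp => ⟨_, p, hp, rfl⟩)
    (by
      rintro i _ ⟨p, -, rfl⟩
      exact integral_nonneg fun x => (Real.exp_pos _).le)
  have hset : { w | ∃ p : Fin n → Measure ℝ, (∀ i, p i ∈ P i) ∧
        w = ∫ x : Fin n → ℝ, Real.exp (t - ∑ i, x i) ∂(Measure.pi p) } =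
      {w | ∃ u : Fin n → ℝ, (∀ i, u i ∈ {w | ∃ p ∈ P i, w = ∫ x, Real.exp (-x) ∂p}) ∧
        w = Real.exp t * ∏ i, u i} := by
    ext w
    constructor
    · rintro ⟨p, hp, rfl⟩
      exact ⟨fun i => ∫ x, Real.exp (-x) ∂(p i), fun i => ⟨p i, hp i, rfl⟩,
        integral_exp_sub_sum_pi p (fun i => (hP i _ (hp i)).1) t⟩
    · rintro ⟨u, hu, rfl⟩
      choose p hp hup using hu
      refine ⟨p, hp, ?_⟩
      rw [integral_exp_sub_sum_pi p (fun i => (hP i _ (hp i)).1) t]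
      simp only [hup]
  rw [hset]
  refine hGLB.csInf_eq ?_
  choose p hp using hPne
  exact ⟨_, fun i => ∫ x, Real.exp (-x) ∂(p i), fun i => ⟨p i, hp i, rfl⟩, rfl⟩
end

section
/- Let α > 0 and t ∈ ℝ. Let f : ℝ → ℝ be twice continuously differentiable on the interval [t − α, t], with f''(s) ≤ 0 for all s ∈ [t − α, t] and f'(t − α) > 0. Let (Ω, 𝔽, ℙ) be a probability space and let X, Y : Ω → ℝ be random variables taking values in [0, α]. If E[f(t − X)] ≥ E[f(t − Y)], then E[X] − E[Y] ≤ − α² · ( inf_{s ∈ [t−α, t]} f''(s) ) / ( 2 · f'(t − α) ). -/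
/-!
Write `a = t - α`, `D = f' a > 0` and `m = inf f'' ≤ 0` over `[a, t]`. Taylor expansion of `f` at
the left endpoint `a` gives, for every `s ∈ [a, t]`,
`f a + D (s - a) + m α² / 2 ≤ f s ≤ f a + D (s - a)`:
the upper bound is concavity, the lower bound is `f'' ≥ m` together with `m ≤ 0` and `0 ≤ s - a ≤ α`
(`taylor_upper`, `taylor_lower`). Applying the upper bound at `s = t - X` and the lower bound at
`s = t - Y`, and taking expectations, the hypothesis `E f(t - Y) ≤ E f(t - X)` becomes
`D (E X - E Y) ≤ -m α² / 2`, and it remains to divide by `D`.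
-/

open MeasureTheory

lemma monotoneOn_Icc_of_hasDerivWithinAt {a b : ℝ} {g g' : ℝ → ℝ}
    (hg : ∀ s ∈ Set.Icc a b, HasDerivWithinAt g (g' s) (Set.Icc a b) s)
    (h0 : ∀ s ∈ Set.Icc a b, 0 ≤ g' s) : MonotoneOn g (Set.Icc a b) :=
  monotoneOn_of_hasDerivWithinAt_nonneg (convex_Icc a b)
    (fun s hs => (hg s hs).continuousWithinAt)
    (fun s hs => (hg s (interior_subset hs)).mono interior_subset)
    (fun s hs => h0 s (interior_subset hs))

/-- A curvature bound `f'' ≥ m` on `[a, b]` forces `f` to lie above its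
second-order Taylor parabola at `a` with curvature `m`. -/
lemma taylor_lower {a b m : ℝ} {f f' f'' : ℝ → ℝ}
    (hf' : ∀ s ∈ Set.Icc a b, HasDerivWithinAt f (f' s) (Set.Icc a b) s)
    (hf'' : ∀ s ∈ Set.Icc a b, HasDerivWithinAt f' (f'' s) (Set.Icc a b) s)
    (hm : ∀ s ∈ Set.Icc a b, m ≤ f'' s) {s : ℝ} (hs : s ∈ Set.Icc a b) :
    f a + f' a * (s - a) + m / 2 * (s - a) ^ 2 ≤ f s := by
  have ha : a ∈ Set.Icc a b := ⟨le_rfl, hs.1.trans hs.2⟩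
  have h1 : MonotoneOn (fun x => f' x - m * (x - a)) (Set.Icc a b) := by
    refine monotoneOn_Icc_of_hasDerivWithinAt (g' := fun x => f'' x - m * 1) (fun x hx => ?_)
      (fun x hx => by linarith [hm x hx])
    exact (hf'' x hx).sub (((hasDerivWithinAt_id x _).sub_const a).const_mul m)
  have h2 : MonotoneOn (fun x => f x - (f' a * (x - a) + m / 2 * (x - a) ^ 2))
      (Set.Icc a b) := by
    refine monotoneOn_Icc_of_hasDerivWithinAt
      (g' := fun x => f' x - (f' a * 1 + m / 2 * (2 * (x - a) ^ (2 - 1) * 1)))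
      (fun x hx => ?_) (fun x hx => ?_)
    · have hd := (hasDerivWithinAt_id x (Set.Icc a b)).sub_const a
      exact (hf' x hx).sub ((hd.const_mul _).add ((hd.pow 2).const_mul _))
    · have := h1 ha hx hx.1
      norm_num at this ⊢
      linarith
  have := h2 ha hs hs.1
  norm_num at this
  linarith

/-- A concave function lies below its tangent at `a`; this is `taylor_lower` for `-f`
with curvature bound `0`. -/
lemma taylor_upper {a b : ℝ} {f f' f'' : ℝ → ℝ}
    (hf' : ∀ s ∈ Set.Icc a b, HasDerivWithinAt f (f' s) (Set.Icc a b) s)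
    (hf'' : ∀ s ∈ Set.Icc a b, HasDerivWithinAt f' (f'' s) (Set.Icc a b) s)
    (hc : ∀ s ∈ Set.Icc a b, f'' s ≤ 0) {s : ℝ} (hs : s ∈ Set.Icc a b) :
    f s ≤ f a + f' a * (s - a) := by
  have := taylor_lower (m := 0) (f := fun x => -f x) (f' := fun x => -f' x)
    (f'' := fun x => -f'' x) (fun x hx => (hf' x hx).neg) (fun x hx => (hf'' x hx).neg)
    (fun x hx => by linarith [hc x hx]) hs
  linarith

/-- Since `f` is only controlled on `[a, b]`, measurability of `f ∘ Z` is obtained by replacing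
`f` with its continuous extension that is constant outside `[a, b]`. -/
lemma integrable_comp_of_continuousOn_Icc {Ω : Type*} [MeasurableSpace Ω] {P : Measure Ω}
    [IsFiniteMeasure P] {a b : ℝ} (hab : a ≤ b) {f : ℝ → ℝ} (hf : ContinuousOn f (Set.Icc a b))
    {Z : Ω → ℝ} (hZ : Measurable Z) (hZr : ∀ ω, Z ω ∈ Set.Icc a b) :
    Integrable (fun ω => f (Z ω)) P := by
  have hext : (fun ω => f (Z ω)) = fun ω => Set.IccExtend hab ((Set.Icc a b).domRestrict f) (Z ω) := by
    funext ω
    rw [Set.IccExtend_of_mem hab _ (hZr ω)]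
    rfl
  have hmeas : Measurable fun ω => f (Z ω) := by
    rw [hext]
    exact hf.domRestrict.Icc_extend'.measurable.comp hZ
  obtain ⟨C, hC⟩ := isCompact_Icc.exists_bound_of_continuousOn hf
  exact Integrable.of_bound hmeas.aestronglyMeasurable C
    (Filter.Eventually.of_forall fun ω => hC _ (hZr ω))

/-- Taylor-expansion estimate: if `f` is twice continuously differentiable on
`[t - α, t]`, concave there, with `f' (t - α) > 0`, and the bounded random cost
`X` has at least as good an expected risk value as `Y`, then the gap in expected
costs is controlled by the ratio of the second to the first derivative. -/
theorem concave_risk_expected_cost_gap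
    {Ω : Type*} [MeasurableSpace Ω] (ℙ : Measure Ω) [IsProbabilityMeasure ℙ]
    (α t : ℝ) (hα : 0 < α)
    (f f' f'' : ℝ → ℝ)
    (hf' : ∀ s ∈ Set.Icc (t - α) t, HasDerivWithinAt f (f' s) (Set.Icc (t - α) t) s)
    (hf'' : ∀ s ∈ Set.Icc (t - α) t, HasDerivWithinAt f' (f'' s) (Set.Icc (t - α) t) s)
    (hf''cont : ContinuousOn f'' (Set.Icc (t - α) t))
    (hconc : ∀ s ∈ Set.Icc (t - α) t, f'' s ≤ 0)
    (hpos : 0 < f' (t - α))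
    (X Y : Ω → ℝ) (hX : Measurable X) (hY : Measurable Y)
    (hXr : ∀ ω, X ω ∈ Set.Icc 0 α) (hYr : ∀ ω, Y ω ∈ Set.Icc 0 α)
    (hcmp : (∫ ω, f (t - Y ω) ∂ℙ) ≤ ∫ ω, f (t - X ω) ∂ℙ) :
    (∫ ω, X ω ∂ℙ) - (∫ ω, Y ω ∂ℙ) ≤
      -α ^ 2 * sInf (f'' '' Set.Icc (t - α) t) / (2 * f' (t - α)) := by
  set m := sInf (f'' '' Set.Icc (t - α) t) with hm_def
  have hm : ∀ s ∈ Set.Icc (t - α) t, m ≤ f'' s := fun s hs =>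
    csInf_le (isCompact_Icc.image_of_continuousOn hf''cont).bddBelow (Set.mem_image_of_mem _ hs)
  have hat : t - α ≤ t := by linarith
  have hm0 : m ≤ 0 := (hm t ⟨hat, le_rfl⟩).trans (hconc t ⟨hat, le_rfl⟩)
  have hfc : ContinuousOn f (Set.Icc (t - α) t) := fun s hs => (hf' s hs).continuousWithinAt
  have hmem : ∀ x ∈ Set.Icc 0 α, t - x ∈ Set.Icc (t - α) t := fun x hx =>
    ⟨by linarith [hx.2], by linarith [hx.1]⟩
  have iX : Integrable X ℙ :=
    integrable_comp_of_continuousOn_Icc hα.le continuousOn_id hX hXr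
  have iY : Integrable Y ℙ :=
    integrable_comp_of_continuousOn_Icc hα.le continuousOn_id hY hYr
  have ifX : Integrable (fun ω => f (t - X ω)) ℙ :=
    integrable_comp_of_continuousOn_Icc hat hfc (hX.const_sub t) fun ω => hmem _ (hXr ω)
  have ifY : Integrable (fun ω => f (t - Y ω)) ℙ :=
    integrable_comp_of_continuousOn_Icc hat hfc (hY.const_sub t) fun ω => hmem _ (hYr ω)
  set D := f' (t - α) with hD
  have affine : ∀ (c : ℝ) (Z : Ω → ℝ), Integrable Z ℙ →
      ∫ ω, (c - D * Z ω) ∂ℙ = c - D * ∫ ω, Z ω ∂ℙ := by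
    intro c Z hZ
    rw [integral_sub (integrable_const c) (hZ.const_mul D), integral_const_mul]
    simp
  have upper : ∫ ω, f (t - X ω) ∂ℙ ≤ f (t - α) + D * α - D * ∫ ω, X ω ∂ℙ := by
    rw [← affine _ X iX]
    refine integral_mono ifX ((integrable_const _).sub (iX.const_mul D)) fun ω => ?_
    have := taylor_upper hf' hf'' hconc (hmem _ (hXr ω))
    dsimp only
    linarith
  have lower : f (t - α) + D * α + m / 2 * α ^ 2 - D * ∫ ω, Y ω ∂ℙ
      ≤ ∫ ω, f (t - Y ω) ∂ℙ := by
    rw [← affine _ Y iY]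
    refine integral_mono ((integrable_const _).sub (iY.const_mul D)) ifY fun ω => ?_
    have h := taylor_lower hf' hf'' hm (hmem _ (hYr ω))
    have hsq : (t - Y ω - (t - α)) ^ 2 ≤ α ^ 2 :=
      pow_le_pow_left₀ (by linarith [(hYr ω).2]) (by linarith [(hYr ω).1]) 2
    -- the curvature `m` is nonpositive, so enlarging the square only lowers the bound
    have hq := mul_le_mul_of_nonpos_left hsq (by linarith : m / 2 ≤ 0)
    dsimp only
    linarith
  rw [le_div_iff₀ (by linarith)]
  linarith
end

section
/- Let α > 0, t ∈ ℝ, and let a, ε be real numbers with a > ε > 0. Let f : ℝ → ℝ be differentiable on (−∞, t] with |f'(s) − a| ≤ ε for all s ≤ t. Let (Ω, 𝔽, ℙ) be a probability space and let X, Y : Ω → ℝ be random variables taking values in [0, α]. If E[f(t − X)] ≥ E[f(t − Y)], then (a − ε) · E[X] ≤ (a + ε) · E[Y]. -/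
/-!
By the mean value inequality applied to `s ↦ f s - a * s`, the loss `f t - f (t - x)` differs from
`a * x` by at most `ε * x` for every `x ≥ 0` (`abs_loss_sub_le`). Hence
`f t - (a + ε) * Y ≤ f (t - Y)` and `f (t - X) ≤ f t - (a - ε) * X` pointwise, and taking
expectations around the comparison hypothesis gives the claim. The expectations of the risk values
are genuine because these are bounded and measurable (`integrable_risk`).
-/

open MeasureTheory

theorem abs_loss_sub_le {t a ε : ℝ} {f f' : ℝ → ℝ}
    (hf' : ∀ s ∈ Set.Iic t, HasDerivWithinAt f (f' s) (Set.Iic t) s)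
    (hclose : ∀ s ∈ Set.Iic t, |f' s - a| ≤ ε) {x : ℝ} (hx : 0 ≤ x) :
    |f t - f (t - x) - a * x| ≤ ε * x := by
  have hg : ∀ s ∈ Set.Iic t,
      HasDerivWithinAt (fun s => f s - a * s) (f' s - a) (Set.Iic t) s := fun s hs => by
    have h := (hf' s hs).sub ((hasDerivWithinAt_id s (Set.Iic t)).const_mul a)
    rw [mul_one] at h
    exact h
  have h := (convex_Iic t).norm_image_sub_le_of_norm_hasDerivWithin_le hg hclose
    (x := t - x) (y := t) (by simpa using hx) Set.self_mem_Iic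
  simp only [Real.norm_eq_abs, sub_sub_cancel, abs_of_nonneg hx] at h
  convert h using 2
  ring

theorem integrable_risk {Ω : Type*} [MeasurableSpace Ω] (ℙ : Measure Ω) [IsFiniteMeasure ℙ]
    {α t a ε : ℝ} {f f' : ℝ → ℝ}
    (hf' : ∀ s ∈ Set.Iic t, HasDerivWithinAt f (f' s) (Set.Iic t) s)
    (hclose : ∀ s ∈ Set.Iic t, |f' s - a| ≤ ε)
    {X : Ω → ℝ} (hX : Measurable X) (hXr : ∀ ω, X ω ∈ Set.Icc 0 α) :
    Integrable (fun ω => f (t - X ω)) ℙ := by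
  -- `f` need not be measurable above `t`, so it is replaced there by the constant `f t`.
  have hcont : Continuous fun s => f (min s t) :=
    ContinuousOn.comp_continuous (fun s hs => (hf' s hs).continuousWithinAt)
      (continuous_id.min continuous_const) fun s => min_le_right s t
  have heq : (fun ω => f (t - X ω)) = fun ω => f (min (t - X ω) t) := by
    funext ω
    rw [min_eq_left (by linarith [(hXr ω).1])]
  have hmeas : Measurable fun ω => f (t - X ω) := by
    rw [heq]
    exact hcont.measurable.comp (measurable_const.sub hX)
  have hε : 0 ≤ ε := (abs_nonneg _).trans (hclose t Set.self_mem_Iic)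
  refine Integrable.of_bound hmeas.aestronglyMeasurable (|f t| + |a| * α + ε * α)
    (ae_of_all _ fun ω => ?_)
  obtain ⟨h0, h1⟩ := hXr ω
  have h := abs_le.1 (abs_loss_sub_le hf' hclose h0)
  have hεX := mul_le_mul_of_nonneg_left h1 hε
  have haX : |a * X ω| ≤ |a| * α := by
    rw [abs_mul, abs_of_nonneg h0]
    exact mul_le_mul_of_nonneg_left h1 (abs_nonneg a)
  have haX' := abs_le.1 haX
  rw [Real.norm_eq_abs, abs_le]
  constructor <;> linarith [neg_abs_le (f t), le_abs_self (f t)]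

/-- If the risk function `f` has derivative uniformly within `ε` of a positive
constant `a` on `(-∞, t]`, and the bounded random cost `X` has at least as good an
expected risk value as `Y`, then `(a - ε) E[X] ≤ (a + ε) E[Y]`. -/
theorem near_linear_risk_expected_cost_comparison
    {Ω : Type*} [MeasurableSpace Ω] (ℙ : Measure Ω) [IsProbabilityMeasure ℙ]
    (α t a ε : ℝ) (hα : 0 < α) (hε : 0 < ε) (hεa : ε < a)
    (f f' : ℝ → ℝ)
    (hf' : ∀ s ∈ Set.Iic t, HasDerivWithinAt f (f' s) (Set.Iic t) s)
    (hclose : ∀ s ∈ Set.Iic t, |f' s - a| ≤ ε)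
    (X Y : Ω → ℝ) (hX : Measurable X) (hY : Measurable Y)
    (hXr : ∀ ω, X ω ∈ Set.Icc 0 α) (hYr : ∀ ω, Y ω ∈ Set.Icc 0 α)
    (hcmp : (∫ ω, f (t - Y ω) ∂ℙ) ≤ ∫ ω, f (t - X ω) ∂ℙ) :
    (a - ε) * ∫ ω, X ω ∂ℙ ≤ (a + ε) * ∫ ω, Y ω ∂ℙ := by
  have hXi : Integrable X ℙ := Integrable.of_bound hX.aestronglyMeasurable α
    (ae_of_all _ fun ω => by rw [Real.norm_eq_abs, abs_of_nonneg (hXr ω).1]; exact (hXr ω).2)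
  have hYi : Integrable Y ℙ := Integrable.of_bound hY.aestronglyMeasurable α
    (ae_of_all _ fun ω => by rw [Real.norm_eq_abs, abs_of_nonneg (hYr ω).1]; exact (hYr ω).2)
  have hupper : ∫ ω, f (t - X ω) ∂ℙ ≤ ∫ ω, (f t - (a - ε) * X ω) ∂ℙ :=
    integral_mono (integrable_risk ℙ hf' hclose hX hXr)
      ((integrable_const _).sub (hXi.const_mul _)) fun ω => by
        have h := abs_le.1 (abs_loss_sub_le hf' hclose (hXr ω).1)
        dsimp only
        linarith
  have hlower : ∫ ω, (f t - (a + ε) * Y ω) ∂ℙ ≤ ∫ ω, f (t - Y ω) ∂ℙ :=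
    integral_mono ((integrable_const _).sub (hYi.const_mul _))
      (integrable_risk ℙ hf' hclose hY hYr) fun ω => by
        have h := abs_le.1 (abs_loss_sub_le hf' hclose (hYr ω).1)
        dsimp only
        linarith
  rw [integral_sub (integrable_const _) (hXi.const_mul _), integral_const_mul] at hupper
  rw [integral_sub (integrable_const _) (hYi.const_mul _), integral_const_mul] at hlower
  linarith
end
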